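/- Case A: Let l be a prime with l ≡ 3 (mod 4) and l > 3, let r ≥ 1, and let N = l^r. Assume f = φ(N)/2 (the index 2 condition), and set h = h(Q(√-l)). Then f and h are odd, and there exist integers a, b such that 4p^h = a² + l b², a ≡ -2 p^{(f+h)/2} (mod l), and G(χ) = (1/2) p^{(f-h)/2} (a + b √-l). -/

import Mathlib

open Complex Polynomial IntermediateField

/-- The complex primitive `p`-th root of unity `exp(2πi/p)`. -/
noncomputable def zetaP (p : ℕ) : ℂ := Complex.exp (2 * Real.pi * Complex.I / p)

/-- The Gauss sum `G(χ^λ) = ∑_{x ∈ F, x ≠ 0} χ^λ(x) ζ_p^{T(x)}`, where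
`T` is the trace map from `F` down to `ZMod p`. -/
noncomputable def gaussSumN (p : ℕ) {F : Type} [Field F] [Fintype F] [Algebra (ZMod p) F]
    (χ : MulChar F ℂ) (lam : ℕ) : ℂ :=
  letI : DecidableEq F := Classical.decEq F
  ∑ x ∈ Finset.univ.filter (fun x : F => x ≠ 0),
    (χ ^ lam) x * zetaP p ^ (Algebra.trace (ZMod p) F x).val

/-- `√-m = i√m ∈ ℂ`. -/
noncomputable def sqrtNeg (m : ℕ) : ℂ := Real.sqrt m * Complex.I

theorem sqrtNeg_sq (m : ℕ) : sqrtNeg m ^ 2 = -(m : ℂ) := by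
  have h : ((Real.sqrt m : ℝ) : ℂ) ^ 2 = ((m : ℝ) : ℂ) := by
    rw [← Complex.ofReal_pow, Real.sq_sqrt (by positivity)]
  simp only [sqrtNeg, mul_pow, Complex.I_sq, h]
  push_cast
  ring

theorem isIntegral_sqrtNeg (m : ℕ) : IsIntegral ℚ (sqrtNeg m) := by
  refine ⟨X ^ 2 + C (m : ℚ), monic_X_pow_add_C _ (by norm_num), ?_⟩
  simp [sqrtNeg_sq]

/-- The class number `h(ℚ(√-m))` of the quadratic field `ℚ(√-m) ⊆ ℂ`. -/
noncomputable def classNumSqrtNeg (m : ℕ) : ℕ :=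
  haveI : FiniteDimensional ℚ ℚ⟮sqrtNeg m⟯ :=
    IntermediateField.adjoin.finiteDimensional (isIntegral_sqrtNeg m)
  haveI : CharZero ℚ⟮sqrtNeg m⟯ :=
    charZero_of_injective_algebraMap (algebraMap ℚ ℚ⟮sqrtNeg m⟯).injective
  haveI : NumberField ℚ⟮sqrtNeg m⟯ := ⟨⟩
  NumberField.classNumber ℚ⟮sqrtNeg m⟯

/-- `√p* = √p` if `p ≡ 1 (mod 4)` and `i√p` if `p ≡ 3 (mod 4)`. -/
noncomputable def sqrtPStar (p : ℕ) : ℂ :=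
  if p % 4 = 1 then (Real.sqrt p : ℂ) else (Real.sqrt p : ℂ) * Complex.I

/-!
Put `G = G(χ)` and `G' = G(χ⁻¹)`. Since `p` generates the subgroup of index `2` in `(ℤ/N)ˣ`, which
is the kernel of the Legendre symbol mod `l`, and `G(χ ^ p) = G(χ)`, the conjugates of `G` are `G`
and `G'`, so `G` lies in `ℚ(√-l)`: both `A = G + G'` and `B = (G - G') / √-l` are rational, in fact
integers, and `G G' = p ^ f` becomes `A² + l B² = 4 p ^ f`.

By Stickelberger's theorem the valuations of `G` and `G'` at a place above `p` are `1 / N` times the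
sums of the least residues mod `N` over the two cosets of `⟨p⟩`. These sums add up to `N f`, and
Dirichlet's class number formula, `l h = |∑ a (a / l)|`, shows that they differ by `N h`. Hence both
valuations are at least `(f - h) / 2`, and `p ^ ((f - h) / 2)` divides `A` and `B`. Modulo a prime
above `l` the values of `χ` are `1`, so `G ≡ G' ≡ -1` and `A ≡ -2 (mod l)`.

The class number formula comes from comparing the coefficients of the Dedekind zeta function with
those of `ζ(s) L(s, (·/l))` and from evaluating `L(1, (·/l))` in closed form. It shows that `h` is
odd, because `∑ a (a / l) ≡ l (l - 1) / 2 (mod 2)`. Stickelberger's theorem follows from the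
congruence for `G(ω⁻¹)`, `ω` the Teichmüller character, by multiplicativity of Jacobi sums, which
gives one of the two inequalities, and from `G G' = p ^ f`, which gives the other.
-/

namespace IndexTwo

section ExpZetaAtOne

open MeasureTheory Set Filter Topology HurwitzZeta

/-- The generating function `∑_{n ≥ 1} zⁿ e^{-nt}`, whose Mellin transform in `t` is
`Γ(s) ∑_{n ≥ 1} zⁿ n^{-s}`. -/
noncomputable def polylogKernel (z : ℂ) (t : ℝ) : ℂ :=
  z * Real.exp (-t) / (1 - z * Real.exp (-t))

variable {z : ℂ} {t : ℝ}

lemma min_le_re_one_sub_mul_exp_neg (ht : 0 ≤ t) :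
    min 1 (1 - z.re) ≤ (1 - z * Real.exp (-t)).re := by
  have hexp : Real.exp (-t) ≤ 1 := Real.exp_le_one_iff.mpr (neg_nonpos.mpr ht)
  rw [sub_re, re_mul_ofReal, one_re]
  rcases le_total 0 z.re with h | h
  · exact (min_le_right _ _).trans (by nlinarith)
  · exact (min_le_left _ _).trans (by nlinarith [Real.exp_pos (-t)])

lemma re_one_sub_mul_exp_neg_pos (hz : z.re < 1) (ht : 0 ≤ t) :
    0 < (1 - z * Real.exp (-t)).re :=
  (lt_min one_pos (sub_pos.mpr hz)).trans_le (min_le_re_one_sub_mul_exp_neg ht)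

lemma continuousOn_polylogKernel (hz : z.re < 1) : ContinuousOn (polylogKernel z) (Ici 0) := by
  unfold polylogKernel
  refine ContinuousOn.div (by fun_prop) (by fun_prop) fun t ht h ↦ ?_
  exact (re_one_sub_mul_exp_neg_pos hz ht).ne' (by rw [h, zero_re])

lemma norm_polylogKernel_le (hz : ‖z‖ ≤ 1) (hz' : z.re < 1) (ht : 0 ≤ t) :
    ‖polylogKernel z t‖ ≤ (min 1 (1 - z.re))⁻¹ * Real.exp (-t) := by
  have : 0 < min 1 (1 - z.re) := lt_min one_pos (sub_pos.mpr hz')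
  rw [polylogKernel, norm_div, norm_mul, Complex.norm_of_nonneg (Real.exp_pos _).le, div_eq_inv_mul]
  gcongr
  · exact (min_le_re_one_sub_mul_exp_neg ht).trans (re_le_norm _)
  · exact mul_le_of_le_one_left (Real.exp_pos _).le hz

lemma integrableOn_polylogKernel (hz : ‖z‖ ≤ 1) (hz' : z.re < 1) :
    IntegrableOn (polylogKernel z) (Ioi 0) := by
  refine Integrable.mono' ((integrableOn_exp_neg_Ioi 0).const_mul (min 1 (1 - z.re))⁻¹)
    (((continuousOn_polylogKernel hz').mono Ioi_subset_Ici_self).aestronglyMeasurable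
      measurableSet_Ioi) ?_
  filter_upwards [ae_restrict_mem measurableSet_Ioi] with t ht
  exact norm_polylogKernel_le hz hz' (mem_Ioi.mp ht).le

lemma integral_polylogKernel (hz : ‖z‖ ≤ 1) (hz' : z.re < 1) :
    ∫ t in Ioi (0 : ℝ), polylogKernel z t = -log (1 - z) := by
  have hderiv (t : ℝ) (ht : t ∈ Ioi 0) :
      HasDerivAt (fun t : ℝ ↦ log (1 - z * Real.exp (-t))) (polylogKernel z t) t := by
    have hinner : HasDerivAt (fun t : ℝ ↦ 1 - z * (Real.exp (-t) : ℂ)) (z * Real.exp (-t)) t := by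
      convert! (((hasDerivAt_neg t).exp.ofReal_comp).const_mul z).const_sub 1 using 1
      push_cast
      ring
    exact hinner.clog_real (.inl (re_one_sub_mul_exp_neg_pos hz' (mem_Ioi.mp ht).le))
  have hcont : ContinuousWithinAt (fun t : ℝ ↦ log (1 - z * Real.exp (-t))) (Ici 0) 0 :=
    ContinuousAt.continuousWithinAt <| ContinuousAt.clog
      (f := fun t : ℝ ↦ 1 - z * (Real.exp (-t) : ℂ)) (by fun_prop)
      (.inl (re_one_sub_mul_exp_neg_pos hz' le_rfl))
  have hlim : Tendsto (fun t : ℝ ↦ log (1 - z * Real.exp (-t))) atTop (𝓝 0) := by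
    have hexp : Tendsto (fun t : ℝ ↦ (Real.exp (-t) : ℂ)) atTop (𝓝 (0 : ℝ)) :=
      (continuous_ofReal.tendsto 0).comp (Real.tendsto_exp_atBot.comp tendsto_neg_atTop_atBot)
    simpa using ((hexp.const_mul z).const_sub 1).clog (by simp)
  simpa using integral_Ioi_of_hasDerivAt_of_tendsto hcont hderiv
    (integrableOn_polylogKernel hz hz') hlim

lemma hasSum_polylogKernel (hz : ‖z‖ ≤ 1) (ht : 0 < t) :
    HasSum (fun n : ℕ ↦ z ^ (n + 1) * Real.exp (-(n + 1 : ℝ) * t)) (polylogKernel z t) := by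
  have hlt : ‖z * Real.exp (-t)‖ < 1 := by
    rw [norm_mul, Complex.norm_of_nonneg (Real.exp_pos _).le]
    exact (mul_le_of_le_one_left (Real.exp_pos _).le hz).trans_lt
      (Real.exp_lt_one_iff.mpr (neg_lt_zero.mpr ht))
  convert! (hasSum_geometric_of_norm_lt_one hlt).mul_left (z * Real.exp (-t)) using 1
  ext n
  have hexp : Real.exp (-(n + 1 : ℝ) * t) = Real.exp (-t) ^ (n + 1) := by
    rw [← Real.exp_nat_mul]
    push_cast
    ring_nf
  rw [hexp]
  push_cast
  ring

lemma hasSum_mellin_polylogKernel {s : ℂ} (hz : ‖z‖ ≤ 1) (hs : 1 < s.re) :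
    HasSum (fun n : ℕ ↦ Gamma s * z ^ (n + 1) / ((n + 1 : ℝ) : ℂ) ^ s)
      (mellin (polylogKernel z) s) := by
  refine hasSum_mellin (p := fun n : ℕ ↦ (n + 1 : ℝ)) (fun n ↦ .inr n.cast_add_one_pos)
    (one_pos.trans hs) (fun t ht ↦ hasSum_polylogKernel hz ht) ?_
  refine ((summable_nat_add_iff 1).mpr (Real.summable_one_div_nat_rpow.mpr hs)).of_nonneg_of_le
    (fun n ↦ by positivity) fun n ↦ ?_
  push_cast
  gcongr
  rw [norm_pow]
  exact pow_le_one₀ (norm_nonneg z) hz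

lemma differentiableAt_mellin_polylogKernel_one (hz : ‖z‖ ≤ 1) (hz' : z.re < 1) :
    DifferentiableAt ℂ (mellin (polylogKernel z)) 1 := by
  have hmin : 0 ≤ (min 1 (1 - z.re))⁻¹ :=
    inv_nonneg.mpr (lt_min one_pos (sub_pos.mpr hz')).le
  refine mellin_differentiableAt_of_isBigO_rpow_exp (a := 1) (b := 0) one_pos
    (((continuousOn_polylogKernel hz').mono Ioi_subset_Ici_self).locallyIntegrableOn
      measurableSet_Ioi)
    (.of_bound (min 1 (1 - z.re))⁻¹ ?_) (.of_bound (min 1 (1 - z.re))⁻¹ ?_) (by simp)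
  · filter_upwards [eventually_ge_atTop 0] with t ht
    simpa using norm_polylogKernel_le hz hz' ht
  · filter_upwards [self_mem_nhdsWithin] with t ht
    have hexp : Real.exp (-t) ≤ 1 := Real.exp_le_one_iff.mpr (neg_nonpos.mpr (mem_Ioi.mp ht).le)
    simpa using (norm_polylogKernel_le hz hz' (mem_Ioi.mp ht).le).trans
      (mul_le_of_le_one_right hmin hexp)

lemma mellin_polylogKernel_one (hz : ‖z‖ ≤ 1) (hz' : z.re < 1) :
    mellin (polylogKernel z) 1 = -log (1 - z) := by
  rw [← integral_polylogKernel hz hz', mellin]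
  simp

lemma norm_exp_two_pi_I_mul (x : ℝ) : ‖cexp (2 * Real.pi * I * x)‖ = 1 := by
  simpa [mul_right_comm] using norm_exp_ofReal_mul_I (2 * Real.pi * x)

lemma re_exp_two_pi_I_mul_lt_one {x : ℝ} (hx : (x : UnitAddCircle) ≠ 0) :
    (cexp (2 * Real.pi * I * x)).re < 1 := by
  refine lt_of_le_of_ne ((re_le_norm _).trans_eq (norm_exp_two_pi_I_mul x)) fun hre ↦ hx ?_
  have him : (cexp (2 * Real.pi * I * x)).im = 0 := by
    have hsq := Complex.sq_norm (cexp (2 * Real.pi * I * x))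
    rw [norm_exp_two_pi_I_mul, normSq_apply, hre] at hsq
    nlinarith
  obtain ⟨n, hn⟩ := exp_eq_one_iff.mp (Complex.ext hre him)
  refine AddCircle.coe_eq_zero_iff 1 |>.mpr ⟨n, ?_⟩
  have hxn : (x : ℂ) = n := mul_left_cancel₀ two_pi_I_ne_zero (hn.trans (mul_comm _ _))
  simpa using (by exact_mod_cast hxn.symm : (n : ℝ) = x)

lemma Gamma_mul_expZeta (x : ℝ) {s : ℂ} (hs : 1 < s.re) :
    Gamma s * expZeta x s = mellin (polylogKernel (cexp (2 * Real.pi * I * x))) s := by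
  have hs0 : s ≠ 0 := fun h ↦ by simp [h, zero_re] at hs; linarith
  have hsum := (hasSum_nat_add_iff' 1).mpr ((hasSum_expZeta_of_one_lt_re x hs).mul_left (Gamma s))
  simp only [Finset.range_one, Finset.sum_singleton, CharP.cast_eq_zero, zero_cpow hs0, div_zero,
    mul_zero, sub_zero] at hsum
  refine hsum.unique ?_
  convert! hasSum_mellin_polylogKernel (norm_exp_two_pi_I_mul x).le hs using 2 with n
  rw [← Complex.exp_nat_mul]
  push_cast
  ring_nf

/-- Both sides of `Gamma_mul_expZeta` are continuous at `s = 1`, where the series no longer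
converges absolutely. -/
theorem expZeta_one {x : ℝ} (hx : (x : UnitAddCircle) ≠ 0) :
    expZeta x 1 = -log (1 - cexp (2 * Real.pi * I * x)) := by
  set z := cexp (2 * Real.pi * I * x)
  have hz : ‖z‖ ≤ 1 := (norm_exp_two_pi_I_mul x).le
  have hz' : z.re < 1 := re_exp_two_pi_I_mul_lt_one hx
  have hcoe : Tendsto (fun t : ℝ ↦ (t : ℂ)) (𝓝[>] 1) (𝓝 1) :=
    (continuous_ofReal.tendsto' 1 1 ofReal_one).mono_left nhdsWithin_le_nhds
  have hGamma : ContinuousAt Gamma 1 := (differentiableAt_Gamma_one).continuousAt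
  have hleft : Tendsto (fun t : ℝ ↦ Gamma t * expZeta x t) (𝓝[>] 1) (𝓝 (Gamma 1 * expZeta x 1)) :=
    (hGamma.mul (differentiable_expZeta_of_ne_zero hx 1).continuousAt).tendsto.comp hcoe
  have hright : Tendsto (fun t : ℝ ↦ mellin (polylogKernel z) t) (𝓝[>] 1)
      (𝓝 (mellin (polylogKernel z) 1)) :=
    (differentiableAt_mellin_polylogKernel_one hz hz').continuousAt.tendsto.comp hcoe
  have heq : (fun t : ℝ ↦ Gamma t * expZeta x t) =ᶠ[𝓝[>] 1]
      fun t : ℝ ↦ mellin (polylogKernel z) t := by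
    filter_upwards [self_mem_nhdsWithin] with t ht
    exact Gamma_mul_expZeta x (by simpa using ht)
  simpa [Gamma_one, mellin_polylogKernel_one hz hz'] using
    tendsto_nhds_unique (hleft.congr' heq) hright

lemma coe_unitAddCircle_ne_zero {x : ℝ} (hx0 : 0 < x) (hx1 : x < 1) : (x : UnitAddCircle) ≠ 0 :=
  fun h ↦ hx0.ne' <| (AddCircle.coe_eq_zero_iff_of_mem_Ico ⟨hx0.le, by simpa using hx1⟩).mp h

lemma arg_one_sub_exp_two_pi_I_mul {x : ℝ} (hx0 : 0 < x) (hx1 : x < 1) :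
    (1 - cexp (2 * Real.pi * I * x)).arg = Real.pi * (x - 1 / 2) := by
  have hpi := Real.pi_pos
  have hsin : 0 < Real.sin (Real.pi * x) :=
    Real.sin_pos_of_pos_of_lt_pi (by positivity) (by nlinarith)
  have hpolar : 1 - cexp (2 * Real.pi * I * x) = ((2 * Real.sin (Real.pi * x) : ℝ) : ℂ) *
      (Complex.cos ((Real.pi * (x - 1 / 2) : ℝ) : ℂ) +
        Complex.sin ((Real.pi * (x - 1 / 2) : ℝ) : ℂ) * I) := by
    have harg : (2 * Real.pi * I * x : ℂ) = ((2 * (Real.pi * x) : ℝ) : ℂ) * I := by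
      push_cast
      ring
    have hsq := congrArg ((↑) : ℝ → ℂ) (Real.sin_sq_add_cos_sq (Real.pi * x))
    rw [harg, exp_mul_I, ← ofReal_cos, ← ofReal_sin, ← ofReal_cos, ← ofReal_sin,
      show Real.pi * (x - 1 / 2) = Real.pi * x - Real.pi / 2 by ring, Real.cos_sub_pi_div_two,
      Real.sin_sub_pi_div_two, Real.cos_two_mul, Real.sin_two_mul]
    push_cast at hsq ⊢
    linear_combination (-2) * hsq
  rw [hpolar, arg_mul_cos_add_sin_mul_I (by positivity) ⟨by nlinarith, by nlinarith⟩]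

theorem sinZeta_one {x : ℝ} (hx0 : 0 < x) (hx1 : x < 1) :
    sinZeta x 1 = Real.pi * (1 / 2 - x) := by
  have hx := coe_unitAddCircle_ne_zero hx0 hx1
  set w := 1 - cexp (2 * Real.pi * I * x)
  have harg : w.arg = Real.pi * (x - 1 / 2) := arg_one_sub_exp_two_pi_I_mul hx0 hx1
  have hconj : 1 - cexp (2 * Real.pi * I * (-x : ℝ)) = (starRingEnd ℂ) w := by
    simp [w, ← Complex.exp_conj, conj_ofNat]
  have hlog : log ((starRingEnd ℂ) w) = (starRingEnd ℂ) (log w) :=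
    log_conj w (by nlinarith [Real.pi_pos, harg])
  rw [sinZeta_eq, ← AddCircle.coe_neg, expZeta_one hx,
    expZeta_one (by simpa using hx), hconj, hlog, neg_sub_neg, ← neg_sub, sub_conj, log_im, harg]
  push_cast
  field_simp
  ring

end ExpZetaAtOne

section LFunctionAtOne

open HurwitzZeta ZMod

variable {N : ℕ} [NeZero N] {Φ : ZMod N → ℂ}

lemma sum_eq_zero_of_odd (hΦ : Φ.Odd) : ∑ j, Φ j = 0 := by
  have h := Equiv.sum_comp (Equiv.neg (ZMod N)) Φ
  simp only [Equiv.neg_apply, hΦ _, Finset.sum_neg_distrib] at h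
  exact self_eq_neg.mp h.symm

lemma odd_mul_sinZeta_one (hΦ : Φ.Odd) (j : ZMod N) :
    Φ j * sinZeta (toAddCircle j) 1 = Real.pi / 2 * Φ j - Real.pi / N * (j.val * Φ j) := by
  rcases eq_or_ne j 0 with rfl | hj
  · simp [hΦ.map_zero]
  · have hN : (0 : ℝ) < N := by exact_mod_cast NeZero.pos N
    have hval : (0 : ℝ) < j.val := by
      exact_mod_cast Nat.pos_of_ne_zero ((ZMod.val_eq_zero j).not.mpr hj)
    have hlt : (j.val : ℝ) < N := by exact_mod_cast ZMod.val_lt j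
    rw [toAddCircle_apply, sinZeta_one (by positivity) ((div_lt_one hN).mpr hlt)]
    push_cast
    ring

/-- For odd `Φ` only the sine parts of the exponential zeta functions survive. -/
theorem LFunction_dft_one_of_odd (hΦ : Φ.Odd) :
    LFunction (𝓕 Φ) 1 = I * (Real.pi / N) * ∑ j : ZMod N, j.val * Φ j := by
  have hcos : ∑ j : ZMod N, Φ j * cosZeta (toAddCircle j) 1 = 0 := by
    refine sum_eq_zero_of_odd fun j ↦ ?_
    rw [hΦ j, map_neg (toAddCircle (N := N)), cosZeta_neg, neg_mul]
  have hexp (j : ZMod N) : Φ j * expZeta (toAddCircle (-j)) 1 =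
      Φ j * cosZeta (toAddCircle j) 1 - I * (Φ j * sinZeta (toAddCircle j) 1) := by
    rw [expZeta, map_neg (toAddCircle (N := N)), cosZeta_neg, sinZeta_neg]
    ring
  simp only [LFunction_dft Φ (.inl hΦ.map_zero), hexp, odd_mul_sinZeta_one hΦ,
    Finset.sum_sub_distrib, ← Finset.mul_sum, hcos, sum_eq_zero_of_odd hΦ]
  ring

lemma gaussSum_mul_LFunction_inv_one {χ : DirichletCharacter ℂ N} (hχ : χ.IsPrimitive)
    (hodd : χ.Odd) : gaussSum χ stdAddChar * DirichletCharacter.LFunction χ⁻¹ 1 =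
      -(I * (Real.pi / N) * ∑ j : ZMod N, j.val * χ j) := by
  have hfourier : 𝓕 χ = fun j ↦ -gaussSum χ stdAddChar * χ⁻¹ j := by
    ext j
    rw [hχ.fourierTransform_eq_inv_mul_gaussSum, ← neg_one_mul j, map_mul,
      MulChar.inv_apply_eq_inv', hodd, inv_neg, inv_one]
    ring
  rw [← LFunction_dft_one_of_odd hodd.to_fun, hfourier]
  simp only [DirichletCharacter.LFunction, LFunction, Finset.mul_sum, ← Finset.sum_neg_distrib]
  refine Finset.sum_congr rfl fun j _ ↦ ?_
  ring

end LFunctionAtOne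

section QuadraticCharacter

variable (l : ℕ) [Fact l.Prime]

/-- The Legendre symbol `(·/l)` as a complex Dirichlet character. -/
noncomputable def legendreChar : DirichletCharacter ℂ l :=
  (quadraticChar (ZMod l)).ringHomComp (Int.castRingHom ℂ)

lemma legendreChar_apply (a : ZMod l) : legendreChar l a = (quadraticChar (ZMod l) a : ℤ) := rfl

lemma isQuadratic_legendreChar : (legendreChar l).IsQuadratic :=
  (quadraticChar_isQuadratic (ZMod l)).comp _

variable {l}

lemma legendreChar_ne_one (hl : l ≠ 2) : legendreChar l ≠ 1 :=
  (MulChar.ringHomComp_ne_one_iff (RingHom.injective_int _)).mpr <|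
    quadraticChar_ne_one (by rwa [ZMod.ringChar_zmod_n])

lemma isPrimitive_legendreChar (hl : l ≠ 2) : (legendreChar l).IsPrimitive := by
  rw [DirichletCharacter.isPrimitive_def]
  refine ((Nat.dvd_prime Fact.out).mp
    (DirichletCharacter.conductor_dvd_level (legendreChar l))).resolve_left fun h ↦ ?_
  exact legendreChar_ne_one hl (DirichletCharacter.eq_one_iff_conductor_eq_one.mpr h)

lemma quadraticChar_neg_one_of_three_mod_four (hl : l % 4 = 3) :
    quadraticChar (ZMod l) (-1) = -1 := by
  rw [quadraticChar_neg_one (by rw [ZMod.ringChar_zmod_n]; omega), ZMod.card,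
    ZMod.χ₄_nat_three_mod_four hl]

lemma odd_legendreChar (hl : l % 4 = 3) : (legendreChar l).Odd := by
  simp [DirichletCharacter.Odd, legendreChar_apply, quadraticChar_neg_one_of_three_mod_four hl]

lemma gaussSum_legendreChar_sq (hl : l % 4 = 3) {ψ : AddChar (ZMod l) ℂ} (hψ : ψ.IsPrimitive) :
    gaussSum (legendreChar l) ψ ^ 2 = -l := by
  have h := gaussSum_sq (χ := legendreChar l) (legendreChar_ne_one (by omega))
    (isQuadratic_legendreChar l) hψ
  rwa [(odd_legendreChar hl : legendreChar l (-1) = -1), ZMod.card, neg_one_mul] at h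

theorem norm_LFunction_legendreChar_one (hl : l % 4 = 3) :
    ‖DirichletCharacter.LFunction (legendreChar l) 1‖ * √l =
      Real.pi / l * |((∑ a : ZMod l, a.val * quadraticChar (ZMod l) a : ℤ) : ℝ)| := by
  have hgauss : ‖gaussSum (legendreChar l) ZMod.stdAddChar‖ = √l := by
    have hsq := congrArg norm (gaussSum_legendreChar_sq hl (ZMod.isPrimitive_stdAddChar l))
    rw [norm_pow, norm_neg, Complex.norm_natCast] at hsq
    rw [← hsq, Real.sqrt_sq (norm_nonneg _)]
  have hsum : ∑ a : ZMod l, (a.val : ℂ) * legendreChar l a =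
      ((∑ a : ZMod l, a.val * quadraticChar (ZMod l) a : ℤ) : ℂ) := by
    simp [legendreChar_apply]
  have hL := congrArg norm (gaussSum_mul_LFunction_inv_one
    (isPrimitive_legendreChar (l := l) (by omega)) (odd_legendreChar hl))
  rw [(isQuadratic_legendreChar l).inv, hsum, norm_mul, hgauss, norm_neg, norm_mul, norm_mul,
    norm_I, one_mul, norm_div, Complex.norm_of_nonneg Real.pi_pos.le, Complex.norm_natCast,
    Complex.norm_intCast] at hL
  rw [mul_comm, hL]

end QuadraticCharacter

section IdealCounting

open Ideal

variable {R : Type*} [CommRing R]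

lemma sup_span_natCast_mul_sup_span_natCast {m n : ℕ} (hmn : m.Coprime n) {K : Ideal R}
    (hK : ((m * n : ℕ) : R) ∈ K) : (K ⊔ span {(m : R)}) * (K ⊔ span {(n : R)}) = K := by
  have hcop : span {(m : R)} ⊔ span {(n : R)} = ⊤ :=
    (isCoprime_span_singleton_iff _ _).mpr (Nat.Coprime.cast hmn) |>.sup_eq
  refine le_antisymm ?_ ?_
  · rw [Ideal.sup_mul, Ideal.mul_sup, Ideal.mul_sup]
    refine sup_le (sup_le Ideal.mul_le_left Ideal.mul_le_left) (sup_le Ideal.mul_le_right ?_)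
    rw [span_singleton_mul_span_singleton, span_singleton_le_iff_mem]
    exact_mod_cast hK
  · calc K = K * (span {(m : R)} ⊔ span {(n : R)}) := by rw [hcop, Ideal.mul_top]
      _ = span {(m : R)} * K ⊔ K * span {(n : R)} := by rw [Ideal.mul_sup, mul_comm K]
      _ ≤ _ := sup_le (Ideal.mul_mono le_sup_right le_sup_left)
        (Ideal.mul_mono le_sup_left le_sup_right)

lemma mul_sup_span_natCast {m n : ℕ} (hmn : m.Coprime n) {I J : Ideal R} (hI : (m : R) ∈ I)
    (hJ : (n : R) ∈ J) : I * J ⊔ span {(m : R)} = I := by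
  have hcop : J ⊔ span {(m : R)} = ⊤ := by
    rw [eq_top_iff, ← (isCoprime_span_singleton_iff _ _).mpr (Nat.Coprime.cast hmn.symm) |>.sup_eq]
    exact sup_le_sup_right ((span_singleton_le_iff_mem _).mpr hJ) _
  refine le_antisymm (sup_le Ideal.mul_le_left ((span_singleton_le_iff_mem _).mpr hI)) ?_
  calc I = I * (J ⊔ span {(m : R)}) := by rw [hcop, Ideal.mul_top]
    _ = I * J ⊔ I * span {(m : R)} := Ideal.mul_sup ..
    _ ≤ _ := sup_le_sup_left Ideal.mul_le_right _

variable [IsDedekindDomain R] [Module.Free ℤ R]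

lemma mem_closure_of_absNorm_eq_pow {q k : ℕ} (hq : q ≠ 0) {I : Ideal R}
    (hI : absNorm I = q ^ k) : I ∈ Submonoid.closure {P : Ideal R | P.IsPrime ∧ (q : R) ∈ P} := by
  have hI0 : I ≠ ⊥ := by
    rintro rfl
    exact pow_ne_zero k hq (by rw [← hI, absNorm_bot])
  rw [← Ideal.prod_normalizedFactors_eq_self hI0]
  refine Submonoid.multiset_prod_mem _ _ fun P hP ↦ Submonoid.subset_closure ?_
  have hPprime : P.IsPrime :=
    isPrime_of_prime (UniqueFactorizationMonoid.prime_of_normalized_factor P hP)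
  have hIP : I ≤ P := dvd_iff_le.mp (UniqueFactorizationMonoid.dvd_of_mem_normalizedFactors hP)
  have hqk : (q : R) ^ k ∈ P := by exact_mod_cast hI ▸ hIP (absNorm_mem I)
  exact ⟨hPprime, hPprime.mem_of_pow_mem k hqk⟩

lemma card_absNorm_eq_pow_of_unique {q d : ℕ} (hq : 1 < q) (hd : 0 < d) {P : Ideal R}
    (hP : ∀ M : Ideal R, M.IsPrime → (q : R) ∈ M → M = P) (hnorm : absNorm P = q ^ d) (k : ℕ) :
    Nat.card {I : Ideal R // absNorm I = q ^ k} = if d ∣ k then 1 else 0 := by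
  have hpow {I : Ideal R} (hI : absNorm I = q ^ k) : ∃ i, P ^ i = I ∧ d * i = k := by
    have hmem := Submonoid.closure_mono (t := {P}) (fun M hM ↦ hP M hM.1 hM.2)
      (mem_closure_of_absNorm_eq_pow (by omega) hI)
    obtain ⟨i, rfl⟩ := Submonoid.mem_closure_singleton.mp hmem
    rw [map_pow, hnorm, ← pow_mul] at hI
    exact ⟨i, rfl, Nat.pow_right_injective hq hI⟩
  split_ifs with hk
  · obtain ⟨j, rfl⟩ := hk
    refine Nat.card_eq_one_iff_exists.mpr ⟨⟨P ^ j, by rw [map_pow, hnorm, pow_mul]⟩, ?_⟩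
    rintro ⟨I, hI⟩
    obtain ⟨i, rfl, hi⟩ := hpow hI
    simp only [Nat.eq_of_mul_eq_mul_left hd hi]
  · refine Nat.card_eq_zero.mpr (.inl ⟨fun ⟨I, hI⟩ ↦ ?_⟩)
    obtain ⟨i, -, rfl⟩ := hpow hI
    exact hk (dvd_mul_right d i)

lemma le_of_pow_mul_pow_eq {q : ℕ} (hq : 1 < q) {P Q : Ideal R} (hPQ : IsCoprime P Q)
    (hP : absNorm P = q) {i j a b : ℕ} (h : P ^ i * Q ^ a = P ^ j * Q ^ b) : i ≤ j := by
  have hdvd : P ^ i ∣ P ^ j := hPQ.pow.dvd_of_dvd_mul_right (h ▸ dvd_mul_right _ (Q ^ a))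
  have hnorm := map_dvd absNorm hdvd
  rw [map_pow, map_pow, hP] at hnorm
  exact (Nat.pow_dvd_pow_iff_le_right hq).mp hnorm

lemma card_absNorm_eq_pow_of_split {q : ℕ} (hq : 1 < q) {P Q : Ideal R} (hPQ : IsCoprime P Q)
    (hprime : ∀ M : Ideal R, M.IsPrime → (q : R) ∈ M → M = P ∨ M = Q)
    (hP : absNorm P = q) (hQ : absNorm Q = q) (k : ℕ) :
    Nat.card {I : Ideal R // absNorm I = q ^ k} = k + 1 := by
  let g (i : Fin (k + 1)) : {I : Ideal R // absNorm I = q ^ k} :=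
    ⟨P ^ (i : ℕ) * Q ^ (k - i), by
      rw [map_mul, map_pow, map_pow, hP, hQ, ← pow_add, Nat.add_sub_cancel' (Fin.is_le i)]⟩
  have hg : g.Bijective := by
    refine ⟨fun i j hij ↦ ?_, fun ⟨I, hI⟩ ↦ ?_⟩
    · have hij : P ^ (i : ℕ) * Q ^ (k - i) = P ^ (j : ℕ) * Q ^ (k - j) := congrArg Subtype.val hij
      exact Fin.ext (le_antisymm (le_of_pow_mul_pow_eq hq hPQ hP hij)
        (le_of_pow_mul_pow_eq hq hPQ hP hij.symm))
    · have hmem := Submonoid.closure_mono (t := {P, Q}) (fun M hM ↦ hprime M hM.1 hM.2)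
        (mem_closure_of_absNorm_eq_pow (by omega) hI)
      obtain ⟨i, j, rfl⟩ := (Submonoid.mem_closure_pair _ _ _).mp hmem
      rw [map_mul, map_pow, map_pow, hP, hQ, ← pow_add] at hI
      obtain rfl : i + j = k := Nat.pow_right_injective hq hI
      exact ⟨⟨i, by omega⟩, Subtype.ext (by simp [g])⟩
  rw [← Nat.card_eq_of_bijective g hg, Nat.card_fin]

variable [Module.Finite ℤ R]

lemma absNorm_coprime {m n : ℕ} (hmn : m.Coprime n) {I : Ideal R} (hI : (m : R) ∈ I) :
    (absNorm I).Coprime n := by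
  have h : absNorm I ∣ m ^ Module.finrank ℤ R := by
    rw [← absNorm_span_natCast]
    exact absNorm_dvd_absNorm_of_le ((span_singleton_le_iff_mem _).mpr hI)
  exact Nat.Coprime.coprime_dvd_left h (hmn.pow_left _)

lemma absNorm_sup_span_natCast {m n : ℕ} (hmn : m.Coprime n) {K : Ideal R}
    (hK : absNorm K = m * n) : absNorm (K ⊔ span {(m : R)}) = m := by
  have hprod : absNorm (K ⊔ span {(m : R)}) * absNorm (K ⊔ span {(n : R)}) = m * n := by
    rw [← map_mul, sup_span_natCast_mul_sup_span_natCast hmn (hK ▸ absNorm_mem K), hK]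
  have hm := absNorm_coprime hmn (mem_sup_right (mem_span_singleton_self (m : R)) :
    (m : R) ∈ K ⊔ span {(m : R)})
  have hn := absNorm_coprime hmn.symm (mem_sup_right (mem_span_singleton_self (n : R)) :
    (n : R) ∈ K ⊔ span {(n : R)})
  exact Nat.dvd_antisymm (hm.dvd_of_dvd_mul_right (hprod ▸ dvd_mul_right ..))
    (hn.symm.dvd_of_dvd_mul_right (hprod ▸ dvd_mul_right ..))

theorem card_absNorm_eq_mul {m n : ℕ} (hmn : m.Coprime n) :
    Nat.card {I : Ideal R // absNorm I = m * n} =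
      Nat.card {I : Ideal R // absNorm I = m} * Nat.card {I : Ideal R // absNorm I = n} := by
  have hmem {K : Ideal R} (hK : absNorm K = m * n) : ((m * n : ℕ) : R) ∈ K :=
    hK ▸ absNorm_mem K
  rw [← Nat.card_prod]
  refine Nat.card_congr
    { toFun K := (⟨K ⊔ span {(m : R)}, absNorm_sup_span_natCast hmn K.2⟩,
        ⟨K ⊔ span {(n : R)}, absNorm_sup_span_natCast hmn.symm (by rw [K.2, mul_comm])⟩)
      invFun I := ⟨I.1 * I.2, by rw [map_mul, I.1.2, I.2.2]⟩
      left_inv := fun ⟨K, hK⟩ ↦ Subtype.ext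
        (sup_span_natCast_mul_sup_span_natCast hmn (hmem hK))
      right_inv := ?_ }
  rintro ⟨⟨I, hI⟩, ⟨J, hJ⟩⟩
  have hmI : (m : R) ∈ I := hI ▸ absNorm_mem I
  have hnJ : (n : R) ∈ J := hJ ▸ absNorm_mem J
  refine Prod.ext (Subtype.ext (mul_sup_span_natCast hmn hmI hnJ)) (Subtype.ext ?_)
  simp only [mul_comm I, mul_sup_span_natCast hmn.symm hnJ hmI]

end IdealCounting

/-- `R = ℤ ⊕ ℤw` with `w² = w - m`, that is, `R` is the quadratic order of discriminant `1 - 4m`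
generated by `w`. -/
structure IsQuadraticOrder (R : Type*) [CommRing R] (w : R) (m : ℤ) : Prop where
  mul_self : w * w = w - m
  exists_eq (x : R) : ∃ a b : ℤ, x = a + b * w
  eq_zero (a b : ℤ) : (a : R) + b * w = 0 → a = 0 ∧ b = 0

namespace IsQuadraticOrder

open Ideal

variable {R : Type*} [CommRing R] {w : R} {m : ℤ}

lemma exists_basis (H : IsQuadraticOrder R w m) : ∃ b : Module.Basis (Fin 2) ℤ R, ⇑b = ![1, w] := by
  have hli : LinearIndependent ℤ ![1, w] := by
    refine LinearIndependent.pair_iff.mpr fun a b h ↦ H.eq_zero a b ?_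
    simpa only [zsmul_eq_mul, mul_one] using h
  have hspan : ⊤ ≤ Submodule.span ℤ (Set.range ![1, w]) := by
    rintro x -
    obtain ⟨a, b, rfl⟩ := H.exists_eq x
    rw [Matrix.range_cons, Matrix.range_cons, Matrix.range_empty, Set.union_empty,
      Set.singleton_union, Submodule.mem_span_pair]
    exact ⟨a, b, by simp only [zsmul_eq_mul, mul_one]⟩
  exact ⟨.mk hli hspan, Module.Basis.coe_mk _ _⟩

lemma finrank_eq_two (H : IsQuadraticOrder R w m) : Module.finrank ℤ R = 2 := by
  obtain ⟨b, -⟩ := H.exists_basis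
  rw [Module.finrank_eq_card_basis b, Fintype.card_fin]

lemma dvd_of_natCast_dvd (H : IsQuadraticOrder R w m) {n : ℕ} {a b : ℤ}
    (h : (n : R) ∣ a + b * w) : (n : ℤ) ∣ b := by
  obtain ⟨x, hx⟩ := h
  obtain ⟨c, d, rfl⟩ := H.exists_eq x
  have := (H.eq_zero (a - n * c) (b - n * d) (by push_cast; linear_combination hx)).2
  exact ⟨d, by linarith⟩

lemma root_mul_root (H : IsQuadraticOrder R w m) (t : R) :
    (w - t) * (w - (1 - t)) = -(t ^ 2 - t + m) := by
  linear_combination H.mul_self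

/-- The ideal `(q, w - t)`, a prime above `q` when `t` is a root of `X² - X + m` modulo `q`. -/
def rootIdeal (w : R) (q : ℕ) (t : ℤ) : Ideal R := span {(q : R), w - t}

lemma natCast_mem_rootIdeal (q : ℕ) (t : ℤ) : (q : R) ∈ rootIdeal w q t :=
  subset_span (by simp)

lemma sub_mem_rootIdeal (q : ℕ) (t : ℤ) : w - t ∈ rootIdeal w q t :=
  subset_span (by simp)

lemma rootIdeal_le {q : ℕ} {t : ℤ} {I : Ideal R} (hq : (q : R) ∈ I) (ht : w - t ∈ I) :
    rootIdeal w q t ≤ I :=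
  span_le.mpr (Set.pair_subset hq ht)

section Root

variable {q : ℕ} {t : ℤ}

lemma rootIdeal_ne_span (H : IsQuadraticOrder R w m) (hq : q.Prime) :
    rootIdeal w q t ≠ span {(q : R)} := by
  intro h
  have hdvd : (q : R) ∣ (-t : ℤ) + (1 : ℤ) * w := by
    rw [← mem_span_singleton, ← h]
    convert sub_mem_rootIdeal (w := w) q t using 1
    push_cast
    ring
  exact (Nat.prime_iff_prime_int.mp hq).not_dvd_one (H.dvd_of_natCast_dvd hdvd)

/-- If `1 = x q + y (w - t)`, multiplying by the conjugate `w - (1 - t)` of `w - t` shows that `q`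
divides `w - (1 - t)`. -/
lemma rootIdeal_ne_top (H : IsQuadraticOrder R w m) (hq : q.Prime)
    (ht : (q : ℤ) ∣ t ^ 2 - t + m) : rootIdeal w q t ≠ ⊤ := by
  intro h
  obtain ⟨x, y, hxy⟩ := mem_span_pair.mp ((eq_top_iff_one (rootIdeal w q t)).mp h)
  obtain ⟨c, hc⟩ := ht
  have hc' : (t : R) ^ 2 - t + m = q * c := by exact_mod_cast congrArg (Int.cast : ℤ → R) hc
  have hdvd : (q : R) ∣ (t - 1 : ℤ) + (1 : ℤ) * w := by
    refine ⟨x * (w - (1 - t)) - y * c, ?_⟩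
    push_cast
    linear_combination -(w - (1 - t)) * hxy + y * H.root_mul_root t - y * hc'
  exact (Nat.prime_iff_prime_int.mp hq).not_dvd_one (H.dvd_of_natCast_dvd hdvd)

lemma isCoprime_rootIdeal (hq : q.Prime) (h : ¬ (q : ℤ) ∣ 2 * t - 1) :
    IsCoprime (rootIdeal w q t) (rootIdeal w q (1 - t)) := by
  obtain ⟨u, v, huv⟩ : IsCoprime (q : ℤ) (2 * t - 1) :=
    (Prime.coprime_iff_not_dvd (Nat.prime_iff_prime_int.mp hq)).mpr h
  have huv' : (u : R) * q + v * (2 * t - 1) = 1 := by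
    exact_mod_cast congrArg (Int.cast : ℤ → R) huv
  refine isCoprime_iff_exists.mpr ⟨u * q - v * (w - t), sub_mem (mul_mem_left _ _
    (natCast_mem_rootIdeal q t)) (mul_mem_left _ _ (sub_mem_rootIdeal q t)),
    v * (w - (1 - t : ℤ)), mul_mem_left _ _ (sub_mem_rootIdeal q (1 - t)), ?_⟩
  push_cast
  linear_combination huv'

lemma sub_mem_or_sub_mem (H : IsQuadraticOrder R w m) (ht : (q : ℤ) ∣ t ^ 2 - t + m)
    {M : Ideal R} (hM : M.IsPrime) (hqM : (q : R) ∈ M) :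
    w - t ∈ M ∨ w - (1 - t : ℤ) ∈ M := by
  obtain ⟨c, hc⟩ := ht
  refine hM.mem_or_mem ?_
  have hc' : (t : R) ^ 2 - t + m = c * q := by
    exact_mod_cast congrArg (Int.cast : ℤ → R) (hc.trans (mul_comm _ _))
  push_cast
  rw [H.root_mul_root, hc']
  exact neg_mem (M.mul_mem_left _ hqM)

end Root

variable [IsDedekindDomain R] [Module.Free ℤ R] {q : ℕ} {t : ℤ}

lemma exists_root_of_absNorm_eq (H : IsQuadraticOrder R w m) (hq : q.Prime) {M : Ideal R}
    (hM : absNorm M = q) : ∃ t : ℤ, (q : ℤ) ∣ t ^ 2 - t + m := by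
  have : NeZero q := ⟨hq.ne_zero⟩
  have : Finite (R ⧸ M) := (absNorm_ne_zero_iff M).mp (by rw [hM]; exact hq.ne_zero)
  let := Fintype.ofFinite (R ⧸ M)
  let e := ZMod.ringEquivOfPrime (R ⧸ M) hq (by rw [← Nat.card_eq_fintype_card, ← hM]; rfl)
  obtain ⟨t, ht⟩ := ZMod.intCast_surjective (e.symm (Ideal.Quotient.mk M w))
  have hw := congrArg (Ideal.Quotient.mk M) H.mul_self
  rw [map_mul, map_sub, map_intCast] at hw
  refine ⟨t, (ZMod.intCast_zmod_eq_zero_iff_dvd _ _).mp (e.injective ?_)⟩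
  push_cast
  rw [ht, map_add, map_sub, map_pow, RingEquiv.apply_symm_apply, map_zero, map_intCast]
  linear_combination hw

variable [Module.Finite ℤ R]

lemma absNorm_span_prime (H : IsQuadraticOrder R w m) : absNorm (span {(q : R)}) = q ^ 2 := by
  rw [absNorm_span_natCast, H.finrank_eq_two]

lemma absNorm_eq_prime (H : IsQuadraticOrder R w m) (hq : q.Prime) {P : Ideal R}
    (hqP : (q : R) ∈ P) (htop : P ≠ ⊤) (hne : P ≠ span {(q : R)}) : absNorm P = q := by
  obtain ⟨J, hJ⟩ := dvd_iff_le.mpr ((span_singleton_le_iff_mem _).mpr hqP)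
  have hmul : absNorm P * absNorm J = q ^ 2 := by rw [← map_mul, ← hJ, H.absNorm_span_prime]
  have hJ1 : absNorm J ≠ 1 := by
    intro h
    rw [absNorm_eq_one_iff.mp h, Ideal.mul_top] at hJ
    exact hne hJ.symm
  exact ((Nat.Prime.mul_eq_prime_sq_iff hq (mt absNorm_eq_one_iff.mp htop) hJ1).mp hmul).1

lemma absNorm_rootIdeal (H : IsQuadraticOrder R w m) (hq : q.Prime)
    (ht : (q : ℤ) ∣ t ^ 2 - t + m) : absNorm (rootIdeal w q t) = q :=
  H.absNorm_eq_prime hq (natCast_mem_rootIdeal q t) (H.rootIdeal_ne_top hq ht)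
    (H.rootIdeal_ne_span hq)

lemma eq_rootIdeal (H : IsQuadraticOrder R w m) (hq : q.Prime) (ht : (q : ℤ) ∣ t ^ 2 - t + m)
    {M : Ideal R} (hM : M.IsPrime) (hqM : (q : R) ∈ M) (htM : w - t ∈ M) :
    M = rootIdeal w q t := by
  have hnorm := H.absNorm_rootIdeal hq ht
  have hprime : (rootIdeal w q t).IsPrime := isPrime_of_irreducible_absNorm (by rwa [hnorm])
  have hmax : (rootIdeal w q t).IsMaximal := hprime.isMaximal fun h ↦
    hq.ne_zero (by rw [← hnorm, h, absNorm_bot])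
  exact (hmax.eq_of_le hM.ne_top (rootIdeal_le hqM htM)).symm

theorem card_absNorm_eq_pow_of_split (H : IsQuadraticOrder R w m) (hq : q.Prime)
    (ht : (q : ℤ) ∣ t ^ 2 - t + m) (h : ¬ (q : ℤ) ∣ 2 * t - 1) (k : ℕ) :
    Nat.card {I : Ideal R // absNorm I = q ^ k} = k + 1 := by
  have ht' : (q : ℤ) ∣ (1 - t) ^ 2 - (1 - t) + m := by convert ht using 1; ring
  refine IndexTwo.card_absNorm_eq_pow_of_split hq.one_lt (isCoprime_rootIdeal (w := w) hq h)
    (fun M hM hqM ↦ ?_) (H.absNorm_rootIdeal hq ht) (H.absNorm_rootIdeal hq ht') k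
  exact (H.sub_mem_or_sub_mem ht hM hqM).imp (H.eq_rootIdeal hq ht hM hqM)
    (H.eq_rootIdeal hq ht' hM hqM)

theorem card_absNorm_eq_pow_of_ramified (H : IsQuadraticOrder R w m) (hq : q.Prime)
    (ht : (q : ℤ) ∣ t ^ 2 - t + m) (h : (q : ℤ) ∣ 2 * t - 1) (k : ℕ) :
    Nat.card {I : Ideal R // absNorm I = q ^ k} = 1 := by
  obtain ⟨c, hc⟩ := h
  have hc' : 2 * (t : R) - 1 = c * q := by
    exact_mod_cast congrArg (Int.cast : ℤ → R) (hc.trans (mul_comm _ _))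
  rw [card_absNorm_eq_pow_of_unique hq.one_lt one_pos (P := rootIdeal w q t)
    (fun M hM hqM ↦ H.eq_rootIdeal hq ht hM hqM ?_) (by rw [H.absNorm_rootIdeal hq ht, pow_one]) k,
    if_pos (one_dvd k)]
  refine (H.sub_mem_or_sub_mem ht hM hqM).elim id fun hmem ↦ ?_
  convert sub_mem hmem (M.mul_mem_left c hqM) using 1
  push_cast
  linear_combination -hc'

theorem card_absNorm_eq_pow_of_inert (H : IsQuadraticOrder R w m) (hq : q.Prime)
    (h : ∀ t : ℤ, ¬ (q : ℤ) ∣ t ^ 2 - t + m) (k : ℕ) :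
    Nat.card {I : Ideal R // absNorm I = q ^ k} = if 2 ∣ k then 1 else 0 := by
  refine card_absNorm_eq_pow_of_unique hq.one_lt two_pos (fun M hM hqM ↦ ?_) H.absNorm_span_prime k
  by_contra hne
  obtain ⟨t, ht⟩ := H.exists_root_of_absNorm_eq hq (H.absNorm_eq_prime hq hqM hM.ne_top hne)
  exact h t ht

end IsQuadraticOrder

section Legendre

variable {l q : ℕ} [Fact l.Prime]

lemma quadraticChar_prime_eq_neg (hl : l % 4 = 3) [Fact q.Prime] (hq : q ≠ 2) (hql : q ≠ l) :
    quadraticChar (ZMod l) q = quadraticChar (ZMod q) (-l) := by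
  have h := quadraticChar_odd_prime (F := ZMod l) (p := q) (by rw [ZMod.ringChar_zmod_n]; omega)
    hq (by rw [ZMod.ringChar_zmod_n]; exact hql.symm)
  rwa [ZMod.card, ZMod.χ₄_nat_three_mod_four hl, Int.cast_neg, Int.cast_one, neg_one_mul] at h

lemma exists_root_two_iff (hl : l % 4 = 3) {m : ℤ} (hm : 4 * m - 1 = l) :
    (∃ t : ℤ, (2 : ℤ) ∣ t ^ 2 - t + m) ↔ quadraticChar (ZMod l) 2 = 1 := by
  rw [quadraticChar_two (by rw [ZMod.ringChar_zmod_n]; omega), ZMod.card,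
    ZMod.χ₈_nat_eq_if_mod_eight, if_neg (by omega)]
  have hdvd (t : ℤ) : (2 : ℤ) ∣ t ^ 2 - t + m ↔ (2 : ℤ) ∣ m := by
    refine dvd_add_right ?_
    convert (Int.even_mul_pred_self t).two_dvd using 1
    ring
  simp only [hdvd, exists_const]
  split_ifs <;> simp <;> omega

lemma exists_root_iff (hl : l % 4 = 3) {m : ℤ} (hm : 4 * m - 1 = l) (hq : q.Prime) (hql : q ≠ l) :
    (∃ t : ℤ, (q : ℤ) ∣ t ^ 2 - t + m) ↔ quadraticChar (ZMod l) q = 1 := by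
  have : Fact q.Prime := ⟨hq⟩
  rcases eq_or_ne q 2 with rfl | hq2
  · exact_mod_cast exists_root_two_iff hl hm
  have hl0 : (-l : ZMod q) ≠ 0 := neg_ne_zero.mpr (ZMod.prime_ne_zero q l hql)
  have : NeZero (2 : ZMod q) := ⟨mod_cast ZMod.prime_ne_zero q 2 hq2⟩
  have hdisc : discrim (1 : ZMod q) (-1) m = -l := by
    have hm' : (4 : ZMod q) * m - 1 = l := by exact_mod_cast congrArg (Int.cast : ℤ → ZMod q) hm
    rw [discrim]
    linear_combination -hm'
  rw [quadraticChar_prime_eq_neg hl hq2 hql, quadraticChar_one_iff_isSquare hl0, ← hdisc]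
  simp only [← ZMod.intCast_zmod_eq_zero_iff_dvd]
  push_cast
  refine ⟨fun ⟨t, ht⟩ ↦ ?_, fun h ↦ ?_⟩
  · rw [discrim_eq_sq_of_quadratic_eq_zero (x := (t : ZMod q)) (by linear_combination ht)]
    exact IsSquare.sq _
  · obtain ⟨x, hx⟩ := exists_quadratic_eq_zero one_ne_zero h
    obtain ⟨t, rfl⟩ := ZMod.intCast_surjective x
    exact ⟨t, by linear_combination hx⟩

end Legendre

section IdealCount

variable {R : Type*} [CommRing R] [IsDedekindDomain R] [Module.Free ℤ R] [Module.Finite ℤ R]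
  {w : R} {m : ℤ} {l q : ℕ} [Fact l.Prime]

lemma zetaMul_prime_pow {N : ℕ} (χ : DirichletCharacter ℂ N) (hq : q.Prime) (k : ℕ) :
    χ.zetaMul (q ^ k) = ∑ i ∈ Finset.range (k + 1), χ q ^ i := by
  rw [DirichletCharacter.zetaMul, ArithmeticFunction.coe_zeta_mul_apply]
  simp only [toArithmeticFunction, ArithmeticFunction.coe_mk, Nat.sum_divisors_prime_pow hq,
    pow_eq_zero_iff', hq.ne_zero, ne_eq, false_and, ↓reduceIte, Nat.cast_pow, map_pow]

lemma IsQuadraticOrder.card_absNorm_eq_prime_pow (H : IsQuadraticOrder R w m) (hl : l % 4 = 3)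
    (hm : 4 * m - 1 = l) (hq : q.Prime) (k : ℕ) :
    (Nat.card {I : Ideal R // Ideal.absNorm I = q ^ k} : ℂ) = (legendreChar l).zetaMul (q ^ k) := by
  rw [zetaMul_prime_pow _ hq, legendreChar_apply]
  rcases eq_or_ne q l with rfl | hql
  · rw [H.card_absNorm_eq_pow_of_ramified hq (t := 2 * m) ⟨m, by rw [← hm]; ring⟩
      ⟨1, by rw [← hm]; ring⟩]
    simp [Finset.sum_range_succ', quadraticChar_eq_zero_iff.mpr]
  have hroot := exists_root_iff hl hm hq hql
  have hdvd : ¬ q ∣ l := (Nat.prime_dvd_prime_iff_eq hq Fact.out).not.mpr hql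
  by_cases hχ : quadraticChar (ZMod l) q = 1
  · obtain ⟨t, ht⟩ := hroot.mpr hχ
    have ht' : ¬ (q : ℤ) ∣ 2 * t - 1 := by
      intro h
      have hl' := dvd_sub (ht.mul_left 4) (h.mul_left (2 * t - 1))
      rw [show 4 * (t ^ 2 - t + m) - (2 * t - 1) * (2 * t - 1) = l by rw [← hm]; ring] at hl'
      exact hdvd (Int.natCast_dvd_natCast.mp hl')
    rw [H.card_absNorm_eq_pow_of_split hq ht ht', hχ]
    simp
  · have : Fact q.Prime := ⟨hq⟩
    rw [H.card_absNorm_eq_pow_of_inert hq (not_exists.mp (hroot.not.mpr hχ)),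
      (quadraticChar_dichotomy (ZMod.prime_ne_zero l q hql.symm)).resolve_left hχ, Int.cast_neg,
      Int.cast_one, neg_one_geom_sum]
    simp only [← even_iff_two_dvd, Nat.even_add_one, ite_not, Nat.cast_ite, Nat.cast_one,
      Nat.cast_zero]

theorem IsQuadraticOrder.card_absNorm_eq (H : IsQuadraticOrder R w m) (hl : l % 4 = 3)
    (hm : 4 * m - 1 = l) {n : ℕ} (hn : n ≠ 0) :
    (Nat.card {I : Ideal R // Ideal.absNorm I = n} : ℂ) = (legendreChar l).zetaMul n := by
  let A : ArithmeticFunction ℂ :=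
    toArithmeticFunction fun n ↦ (Nat.card {I : Ideal R // Ideal.absNorm I = n} : ℂ)
  have hA {n : ℕ} (hn : n ≠ 0) : A n = Nat.card {I : Ideal R // Ideal.absNorm I = n} := if_neg hn
  have hmul : A.IsMultiplicative := by
    refine ArithmeticFunction.IsMultiplicative.iff_ne_zero.mpr ⟨?_, fun ha hb hab ↦ ?_⟩
    · rw [hA one_ne_zero]
      simp [Ideal.absNorm_eq_one_iff]
    · rw [hA (mul_ne_zero ha hb), hA ha, hA hb, card_absNorm_eq_mul hab, Nat.cast_mul]
  rw [← hA hn, (ArithmeticFunction.IsMultiplicative.eq_iff_eq_on_prime_powers _ hmul _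
    (DirichletCharacter.isMultiplicative_zetaMul (legendreChar l))).mpr fun q k hq ↦ ?_]
  rw [hA (pow_ne_zero _ hq.ne_zero), H.card_absNorm_eq_prime_pow hl hm hq]

end IdealCount

section ImaginaryQuadraticField

open NumberField

lemma exists_intCast_eq_of_squarefree_mul_sq {d : ℕ} (hd : Squarefree d) {y : ℚ} {c : ℤ}
    (h : (d : ℚ) * y ^ 2 = c) : ∃ b : ℤ, (b : ℚ) = y := by
  have hden : (y.den : ℚ) ≠ 0 := by exact_mod_cast y.den_ne_zero
  have hnum : (d : ℤ) * y.num ^ 2 = y.den ^ 2 * c := by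
    rw [← Rat.num_div_den y] at h
    field_simp at h
    exact_mod_cast h
  have hcop : IsCoprime ((y.den : ℤ) ^ 2) (y.num ^ 2) :=
    (Rat.isCoprime_num_den y).symm.pow
  have hdvd : y.den * y.den ∣ d := by
    have : (y.den : ℤ) ^ 2 ∣ d := hcop.dvd_of_dvd_mul_right ⟨c, hnum⟩
    rw [← sq]
    exact_mod_cast this
  have hone : y.den = 1 := Nat.isUnit_iff.mp (hd _ hdvd)
  exact ⟨y.num, Rat.coe_int_num_of_den_eq_one hone⟩

lemma exists_intCast_eq_of_isIntegral {q : ℚ} (hq : IsIntegral ℤ (q : ℂ)) :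
    ∃ n : ℤ, (n : ℚ) = q := by
  rw [← eq_ratCast (algebraMap ℚ ℂ), isIntegral_algebraMap_iff (algebraMap ℚ ℂ).injective] at hq
  exact IsIntegrallyClosed.isIntegral_iff.mp hq

/-- `K = ℚ(s)` with `s² = -d`. -/
structure IsImaginaryQuadratic (K : Type*) [Field K] (s : K) (d : ℕ) : Prop where
  sq : s ^ 2 = -d
  exists_eq (x : K) : ∃ u v : ℚ, x = u + v * s

namespace IsImaginaryQuadratic

variable {K : Type*} [Field K] {s : K} {d : ℕ}

lemma conj_map (hK : IsImaginaryQuadratic K s d) (hd : d ≠ 0) (φ : K →+* ℂ) :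
    starRingEnd ℂ (φ s) = -φ s := by
  have hsq : φ s ^ 2 = -d := by rw [← map_pow, hK.sq, map_neg, map_natCast]
  have hre := congrArg Complex.re hsq
  have him := congrArg Complex.im hsq
  simp only [pow_two, mul_re, mul_im, neg_re, neg_im, natCast_re, natCast_im] at hre him
  have hd' : (0 : ℝ) < d := by exact_mod_cast Nat.pos_of_ne_zero hd
  have : (φ s).re = 0 := by
    by_contra hne
    have : (φ s).im = 0 := (mul_eq_zero.mp (by linarith : (φ s).re * (φ s).im = 0)).resolve_left hne
    rw [this] at hre
    nlinarith [sq_nonneg (φ s).re]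
  apply Complex.ext <;> simp [this]

variable [NumberField K]

-- The trace and the norm of `x = u + vs` are `2u` and `u² + dv²`.
lemma exists_intCast_of_isIntegral (hK : IsImaginaryQuadratic K s d) (hd : Squarefree d) {u v : ℚ}
    (hx : IsIntegral ℤ ((u : K) + v * s)) :
    ∃ a b n : ℤ, (a : ℚ) = 2 * u ∧ (b : ℚ) = 2 * v ∧ a ^ 2 + d * b ^ 2 = 4 * n := by
  obtain ⟨φ⟩ : Nonempty (K →+* ℂ) := inferInstance
  have hsq : φ s ^ 2 = -d := by rw [← map_pow, hK.sq, map_neg, map_natCast]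
  have hφ : φ (u + v * s) = u + v * φ s := by
    rw [map_add, map_mul, map_ratCast, map_ratCast]
  have hconj : starRingEnd ℂ (φ (u + v * s)) = u - v * φ s := by
    rw [hφ, map_add, map_mul, map_ratCast, map_ratCast, hK.conj_map hd.ne_zero, mul_neg,
      sub_eq_add_neg]
  have hint : IsIntegral ℤ (φ (u + v * s)) := hx.map φ.toIntAlgHom
  have hint' : IsIntegral ℤ (starRingEnd ℂ (φ (u + v * s))) :=
    hint.map (starRingEnd ℂ).toIntAlgHom
  obtain ⟨a, ha⟩ : ∃ a : ℤ, (a : ℚ) = 2 * u := exists_intCast_eq_of_isIntegral <| by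
    convert! hint.add hint' using 1
    rw [hconj, hφ]
    push_cast
    ring
  obtain ⟨n, hn⟩ : ∃ n : ℤ, (n : ℚ) = u ^ 2 + d * v ^ 2 := exists_intCast_eq_of_isIntegral <| by
    convert! hint.mul hint' using 1
    rw [hconj, hφ]
    push_cast
    linear_combination (v : ℂ) ^ 2 * hsq
  obtain ⟨b, hb⟩ := exists_intCast_eq_of_squarefree_mul_sq hd (y := 2 * v) (c := 4 * n - a ^ 2)
    (by push_cast; rw [ha, hn]; ring)
  refine ⟨a, b, n, ha, hb, ?_⟩
  have : (a : ℚ) ^ 2 + d * b ^ 2 = 4 * n := by rw [ha, hb, hn]; ring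
  exact_mod_cast this

lemma isIntegral_one_add_div_two (hK : IsImaginaryQuadratic K s d) {m : ℤ}
    (hm : 4 * m - 1 = d) : IsIntegral ℤ ((1 + s) / 2) := by
  have hmK : (4 : K) * m - 1 = d := by exact_mod_cast congrArg (Int.cast : ℤ → K) hm
  refine ⟨X ^ 2 - X + C m, by monicity!, ?_⟩
  simp only [eval₂_sub, eval₂_add, eval₂_pow, eval₂_X, eval₂_C]
  simp only [algebraMap_int_eq, eq_intCast]
  field_simp
  linear_combination hK.sq + hmK

lemma exists_int_eq_add_mul (hK : IsImaginaryQuadratic K s d) (hd : Squarefree d)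
    (hodd : Odd (d : ℤ)) (x : 𝓞 K) : ∃ a b : ℤ, (x : K) = a + b * ((1 + s) / 2) := by
  obtain ⟨u, v, hx⟩ := hK.exists_eq x
  obtain ⟨a, b, n, ha, hb, hab⟩ :=
    hK.exists_intCast_of_isIntegral hd (u := u) (v := v) (by rw [← hx]; exact x.isIntegral_coe)
  obtain ⟨c, hc⟩ : Even (a - b) := by
    have : Even (a ^ 2 + d * b ^ 2) := ⟨2 * n, by rw [hab]; ring⟩
    rw [Int.even_add, Int.even_mul, Int.even_pow' two_ne_zero, Int.even_pow' two_ne_zero] at this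
    rw [Int.even_sub, this, or_iff_right (Int.not_even_iff_odd.mpr hodd)]
  refine ⟨c, b, ?_⟩
  have hcK : (a : K) - b = c + c := by exact_mod_cast congrArg (Int.cast : ℤ → K) hc
  have haK : (a : K) = 2 * u := by exact_mod_cast congrArg (Rat.cast : ℚ → K) ha
  have hbK : (b : K) = 2 * v := by exact_mod_cast congrArg (Rat.cast : ℚ → K) hb
  rw [hx]
  linear_combination (hcK - haK - s * hbK) / 2

lemma eq_zero_of_add_mul_eq_zero (hK : IsImaginaryQuadratic K s d) (hd : d ≠ 0) {a b : ℤ}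
    (h : (a : K) + b * ((1 + s) / 2) = 0) : a = 0 ∧ b = 0 := by
  have hnorm : (2 * a + b) ^ 2 + d * b ^ 2 = 0 := by
    have : (2 * a + b : K) ^ 2 + d * b ^ 2 = 0 := by
      linear_combination (2 * a + b - b * s : K) * 2 * h + (b : K) ^ 2 * hK.sq
    exact_mod_cast this
  have hdpos : (0 : ℤ) < d := by exact_mod_cast Nat.pos_of_ne_zero hd
  have hb : b = 0 := by
    by_contra hb
    nlinarith [sq_nonneg (2 * a + b), mul_pos hdpos (sq_pos_of_ne_zero hb)]
  subst hb
  simpa using hnorm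

lemma exists_isQuadraticOrder (hK : IsImaginaryQuadratic K s d) (hd : Squarefree d) {m : ℤ}
    (hm : 4 * m - 1 = d) : ∃ w : 𝓞 K, IsQuadraticOrder (𝓞 K) w m := by
  have hmK : (4 : K) * m - 1 = d := by exact_mod_cast congrArg (Int.cast : ℤ → K) hm
  obtain ⟨w, hw⟩ : ∃ w : 𝓞 K, (w : K) = (1 + s) / 2 :=
    ⟨⟨(1 + s) / 2, hK.isIntegral_one_add_div_two hm⟩, rfl⟩
  refine ⟨w, RingOfIntegers.ext ?_, fun x ↦ ?_, fun a b h ↦ ?_⟩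
  · simp only [map_mul, map_sub, map_intCast, hw]
    linear_combination (hK.sq + hmK) / 4
  · obtain ⟨a, b, hx⟩ := hK.exists_int_eq_add_mul hd ⟨2 * m - 1, by linarith⟩ x
    exact ⟨a, b, RingOfIntegers.ext (by simpa [hw] using hx)⟩
  · apply hK.eq_zero_of_add_mul_eq_zero hd.ne_zero
    simpa [hw] using congrArg (algebraMap (𝓞 K) K) h

end IsImaginaryQuadratic

namespace IsQuadraticOrder

variable {R : Type*} [CommRing R] {w : R} {m : ℤ}

lemma trace_eq (H : IsQuadraticOrder R w m) (x y : ℤ) :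
    Algebra.trace ℤ R (x + y * w) = 2 * x + y := by
  obtain ⟨b, hb⟩ := H.exists_basis
  have hb0 : b 0 = 1 := by rw [hb]; rfl
  have hb1 : b 1 = w := by rw [hb]; rfl
  have hrepr (x y : ℤ) : b.repr (x + y * w) = Finsupp.single 0 x + Finsupp.single 1 y := by
    have : (x : R) + y * w = x • b 0 + y • b 1 := by rw [hb0, hb1]; simp
    rw [this, map_add, map_smul, map_smul, b.repr_self, b.repr_self]
    simp
  have hmul : ((x : R) + y * w) * w = ((-y * m : ℤ) : R) + ((x + y : ℤ) : R) * w := by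
    push_cast
    linear_combination (y : R) * H.mul_self
  rw [Algebra.trace_eq_matrix_trace b, Matrix.trace_fin_two, Algebra.leftMulMatrix_eq_repr_mul,
    Algebra.leftMulMatrix_eq_repr_mul, hb0, hb1, mul_one, hmul, hrepr, hrepr]
  simp
  ring

variable {K : Type*} [Field K] {w : 𝓞 K}

lemma map_re_eq (H : IsQuadraticOrder (𝓞 K) w m) (hm : 0 < m) (φ : K →+* ℂ) :
    (φ w).re = 1 / 2 ∧ (φ w).im ^ 2 = m - 1 / 4 := by
  have hsq : φ w * φ w = φ w - m := by
    have := congrArg (φ.comp (algebraMap (𝓞 K) K)) H.mul_self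
    simpa only [map_mul, map_sub, map_intCast, RingHom.coe_comp, Function.comp_apply] using this
  have hre := congrArg Complex.re hsq
  have him := congrArg Complex.im hsq
  simp only [mul_re, mul_im, sub_re, sub_im, intCast_re, intCast_im] at hre him
  have hm' : (1 : ℝ) ≤ m := by exact_mod_cast hm
  have hhalf : (φ w).re = 1 / 2 := by
    by_contra hne
    have : (φ w).im = 0 := (mul_eq_zero.mp (by linarith : ((φ w).re - 1 / 2) * (φ w).im = 0)
      ).resolve_left (sub_ne_zero.mpr hne)
    rw [this] at hre
    nlinarith [sq_nonneg ((φ w).re - 1 / 2)]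
  refine ⟨hhalf, ?_⟩
  rw [hhalf] at hre
  linarith

lemma normSq_map (H : IsQuadraticOrder (𝓞 K) w m) (hm : 0 < m) (φ : K →+* ℂ) (a b : ℤ) :
    normSq (φ ((a + b * w : 𝓞 K) : K)) = a ^ 2 + a * b + m * b ^ 2 := by
  obtain ⟨hre, him⟩ := H.map_re_eq hm φ
  have : φ ((a + b * w : 𝓞 K) : K) = a + b * φ w := by simp
  rw [this, normSq_apply]
  simp only [add_re, add_im, mul_re, mul_im, intCast_re, intCast_im, hre]
  linear_combination (b : ℝ) ^ 2 * him

lemma isTotallyComplex (H : IsQuadraticOrder (𝓞 K) w m) (hm : 0 < m) : IsTotallyComplex K where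
  isComplex v := by
    rw [← InfinitePlace.not_isReal_iff_isComplex, InfinitePlace.isReal_iff,
      ComplexEmbedding.isReal_iff]
    intro hreal
    obtain ⟨-, him⟩ := H.map_re_eq hm v.embedding
    have : (v.embedding w).im = 0 := conj_eq_iff_im.mp (RingHom.congr_fun hreal (w : K))
    have hm' : (1 : ℝ) ≤ m := by exact_mod_cast hm
    rw [this] at him
    linarith

variable [NumberField K]

lemma discr_eq (H : IsQuadraticOrder (𝓞 K) w m) : discr K = 1 - 4 * m := by
  obtain ⟨b, hb⟩ := H.exists_basis
  have hone : Algebra.trace ℤ (𝓞 K) 1 = 2 := by simpa using H.trace_eq 1 0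
  have hw : Algebra.trace ℤ (𝓞 K) w = 1 := by simpa using H.trace_eq 0 1
  have hww : Algebra.trace ℤ (𝓞 K) (w * w) = 1 - 2 * m := by
    have := H.trace_eq (-m) 1
    rw [show ((-m : ℤ) : 𝓞 K) + (1 : ℤ) * w = w * w by rw [H.mul_self]; push_cast; ring] at this
    linarith
  rw [← discr_eq_discr K b, Algebra.discr_def, Matrix.det_fin_two]
  simp [Algebra.traceMatrix_apply, Algebra.traceForm_apply, hb, hone, hw, hww]
  ring

lemma nrComplexPlaces_eq_one (H : IsQuadraticOrder (𝓞 K) w m) (hm : 0 < m) :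
    InfinitePlace.nrComplexPlaces K = 1 := by
  have := H.isTotallyComplex hm
  have hcard := InfinitePlace.card_add_two_mul_card_eq_rank K
  rw [IsTotallyComplex.nrRealPlaces_eq_zero, ← RingOfIntegers.rank, H.finrank_eq_two] at hcard
  omega

lemma regulator_eq_one (H : IsQuadraticOrder (𝓞 K) w m) (hm : 0 < m) : Units.regulator K = 1 := by
  classical
  have := H.isTotallyComplex hm
  have hcard : Fintype.card (InfinitePlace K) = 1 := by
    rw [InfinitePlace.card_eq_nrRealPlaces_add_nrComplexPlaces,
      IsTotallyComplex.nrRealPlaces_eq_zero, H.nrComplexPlaces_eq_one hm]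
  have : IsEmpty {v : InfinitePlace K // v ≠ Units.dirichletUnitTheorem.w₀} :=
    ⟨fun v ↦ v.2 (Fintype.card_le_one_iff.mp hcard.le _ _)⟩
  rw [Units.regulator_eq_det', Matrix.det_isEmpty, abs_one]

lemma eq_one_or_neg_one_of_mem_torsion (H : IsQuadraticOrder (𝓞 K) w m) (hm : 1 < m)
    {x : (𝓞 K)ˣ} (hx : x ∈ Units.torsion K) : x = 1 ∨ x = -1 := by
  obtain ⟨v⟩ : Nonempty (InfinitePlace K) := inferInstance
  obtain ⟨a, b, hab⟩ := H.exists_eq x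
  have hnorm : a ^ 2 + a * b + m * b ^ 2 = 1 := by
    have : ‖v.embedding x‖ = 1 := by
      rw [InfinitePlace.norm_embedding_eq]
      exact Units.mem_torsion K |>.mp hx v
    rw [hab] at this
    have h := H.normSq_map (by omega) v.embedding a b
    rw [normSq_eq_norm_sq, this] at h
    exact_mod_cast h.symm.trans (one_pow 2)
  have hb : b = 0 := by
    by_contra hb
    nlinarith [sq_nonneg (2 * a + b), sq_pos_of_ne_zero hb]
  subst hb
  have ha : a = 1 ∨ a = -1 := sq_eq_one_iff.mp (by linarith)
  exact ha.imp (fun ha ↦ Units.ext (by simp [hab, ha])) (fun ha ↦ Units.ext (by simp [hab, ha]))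

lemma torsionOrder_eq_two (H : IsQuadraticOrder (𝓞 K) w m) (hm : 1 < m) :
    Units.torsionOrder K = 2 := by
  have hle : Units.torsionOrder K ≤ 2 := calc
    Units.torsionOrder K ≤ ({1, -1} : Set (𝓞 K)ˣ).ncard :=
      Set.ncard_le_ncard (fun _ ↦ H.eq_one_or_neg_one_of_mem_torsion hm) (Set.toFinite _)
    _ ≤ 2 := (Set.ncard_insert_le _ _).trans_eq (by rw [Set.ncard_singleton])
  obtain ⟨k, hk⟩ := Units.even_torsionOrder K
  have := Units.torsionOrder_pos K
  omega

end IsQuadraticOrder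

end ImaginaryQuadraticField

section ClassNumberFormula

open Filter NumberField Topology

lemma LSeries_zetaMul {N : ℕ} [NeZero N] (χ : DirichletCharacter ℂ N) {s : ℂ} (hs : 1 < s.re) :
    LSeries χ.zetaMul s = riemannZeta s * χ.LFunction s := by
  have hχ (n : ℕ) (hn : n ≠ 0) : χ n = toArithmeticFunction (χ ·) n :=
    χ.apply_eq_toArithmeticFunction_apply hn
  rw [DirichletCharacter.zetaMul, ← ArithmeticFunction.coe_mul, LSeries_convolution'
    (f := (ArithmeticFunction.zeta : ArithmeticFunction ℂ))
    (ArithmeticFunction.LSeriesSummable_zeta_iff.mpr hs)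
    ((LSeriesSummable_congr _ (hχ _)).mp (ZMod.LSeriesSummable_of_one_lt_re χ hs)),
    χ.LFunction_eq_LSeries hs, ← ArithmeticFunction.LSeries_zeta_eq_riemannZeta hs,
    LSeries_congr (hχ _)]
  rfl

lemma tendsto_sub_one_mul_riemannZeta_mul_LFunction {N : ℕ} [NeZero N] {χ : DirichletCharacter ℂ N}
    (hχ : χ ≠ 1) :
    Tendsto (fun t : ℝ ↦ ((t : ℂ) - 1) * (riemannZeta t * χ.LFunction t)) (𝓝[>] 1)
      (𝓝 (χ.LFunction 1)) := by
  have hcast : Tendsto (fun t : ℝ ↦ (t : ℂ)) (𝓝[>] 1) (𝓝[≠] 1) :=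
    continuous_ofReal.continuousWithinAt.tendsto_nhdsWithin fun t (ht : 1 < t) ↦ by
      simpa using ht.ne'
  have hL : Tendsto χ.LFunction (𝓝[≠] 1) (𝓝 (χ.LFunction 1)) :=
    ((DirichletCharacter.differentiable_LFunction hχ).continuous.tendsto 1).mono_left
      nhdsWithin_le_nhds
  have h := (riemannZeta_residue_one.mul hL).comp hcast
  simpa only [Function.comp_def, one_mul, mul_assoc] using h

variable {K : Type*} [Field K] [NumberField K] {l : ℕ} {m : ℤ}

lemma IsQuadraticOrder.dedekindZeta_residue_eq {w : 𝓞 K} (H : IsQuadraticOrder (𝓞 K) w m)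
    (hm : 1 < m) :
    dedekindZeta_residue K = Real.pi * classNumber K / √(4 * m - 1) := by
  have := H.isTotallyComplex (by omega)
  have habs : |((1 - 4 * m : ℤ) : ℝ)| = 4 * m - 1 := by
    rw [← Int.cast_abs, abs_of_neg (by omega)]
    push_cast
    ring
  have hne : √(4 * m - 1 : ℝ) ≠ 0 := by
    have : (1 : ℝ) < m := by exact_mod_cast hm
    exact (Real.sqrt_pos.mpr (by linarith)).ne'
  rw [dedekindZeta_residue_def, IsTotallyComplex.nrRealPlaces_eq_zero,
    H.nrComplexPlaces_eq_one (by omega), H.regulator_eq_one (by omega), H.torsionOrder_eq_two hm,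
    H.discr_eq, habs]
  push_cast
  field_simp

variable [Fact l.Prime]

theorem IsQuadraticOrder.LFunction_legendreChar_one {w : 𝓞 K} (H : IsQuadraticOrder (𝓞 K) w m)
    (hl : 3 < l) (hm : 4 * m - 1 = l) :
    (legendreChar l).LFunction 1 = (Real.pi * classNumber K / √l : ℝ) := by
  have hl4 : l % 4 = 3 := by omega
  have hlm : (l : ℝ) = 4 * m - 1 := by exact_mod_cast hm.symm
  rw [hlm, ← H.dedekindZeta_residue_eq (by omega)]
  refine tendsto_nhds_unique ((tendsto_sub_one_mul_riemannZeta_mul_LFunction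
    (legendreChar_ne_one (by omega))).congr' ?_) (tendsto_sub_one_mul_dedekindZeta_nhdsGT K)
  filter_upwards [self_mem_nhdsWithin] with t (ht : 1 < t)
  have hzeta : dedekindZeta K t = LSeries (legendreChar l).zetaMul t :=
    LSeries_congr (fun hn ↦ H.card_absNorm_eq hl4 hm hn) _
  rw [hzeta, LSeries_zetaMul _ (by simpa using ht)]

theorem IsQuadraticOrder.mul_classNumber_eq {w : 𝓞 K} (H : IsQuadraticOrder (𝓞 K) w m)
    (hl : 3 < l) (hm : 4 * m - 1 = l) :
    (l * classNumber K : ℤ) = |∑ a : ZMod l, (a.val : ℤ) * quadraticChar (ZMod l) a| := by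
  have hL := norm_LFunction_legendreChar_one (l := l) (by omega)
  have hl0 : (0 : ℝ) < l := by exact_mod_cast (by omega : 0 < l)
  have hsqrt : √(l : ℝ) ≠ 0 := (Real.sqrt_pos.mpr hl0).ne'
  rw [H.LFunction_legendreChar_one hl hm, Complex.norm_of_nonneg (by positivity)] at hL
  field_simp at hL
  rw [mul_comm]
  exact_mod_cast hL

lemma odd_sum_val_mul_quadraticChar (hl : l % 4 = 3) :
    Odd (∑ a : ZMod l, (a.val : ℤ) * quadraticChar (ZMod l) a) := by
  have hdiff : Even (∑ a : ZMod l, (a.val : ℤ) * quadraticChar (ZMod l) a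
      - ∑ a : ZMod l, (a.val : ℤ)) := by
    rw [← Finset.sum_sub_distrib]
    refine Finset.even_sum _ fun a _ ↦ ?_
    rcases eq_or_ne a 0 with rfl | ha
    · simp
    · rcases quadraticChar_dichotomy ha with h | h <;> rw [h]
      · simp
      · exact ⟨-a.val, by ring⟩
  have hsum : Odd (∑ a : ZMod l, (a.val : ℤ)) := by
    obtain ⟨k, rfl⟩ : ∃ k, l = 4 * k + 3 := ⟨l / 4, by omega⟩
    have : ∑ a : ZMod (4 * k + 3), a.val = (4 * k + 3) * (2 * k + 1) := by
      have hrange : ∑ a : ZMod (4 * k + 3), a.val = ∑ i ∈ Finset.range (4 * k + 3), i :=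
        (Finset.sum_range id).symm
      have := Finset.sum_range_id_mul_two (4 * k + 3)
      rw [← hrange, show 4 * k + 3 - 1 = 2 * (2 * k + 1) by omega] at this
      linarith
    rw [← Nat.cast_sum, this, Int.odd_coe_nat, Nat.odd_mul]
    exact ⟨⟨2 * k + 1, by ring⟩, ⟨k, rfl⟩⟩
  simpa using hdiff.add_odd hsum

lemma isImaginaryQuadratic_adjoin_sqrtNeg (d : ℕ) :
    IsImaginaryQuadratic ℚ⟮sqrtNeg d⟯ (AdjoinSimple.gen ℚ (sqrtNeg d)) d where
  sq := Subtype.ext (by push_cast; rw [AdjoinSimple.coe_gen, sqrtNeg_sq])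
  exists_eq := by
    rintro ⟨x, hx⟩
    suffices ∃ u v : ℚ, x = u + v * sqrtNeg d by
      obtain ⟨u, v, huv⟩ := this
      exact ⟨u, v, Subtype.ext (by push_cast; rw [AdjoinSimple.coe_gen]; exact huv)⟩
    rw [← mem_toSubalgebra, adjoin_simple_toSubalgebra_of_isAlgebraic
      (isIntegral_sqrtNeg d).isAlgebraic] at hx
    induction hx using Algebra.adjoin_induction with
    | mem x hx => exact ⟨0, 1, by rw [Set.mem_singleton_iff.mp hx]; simp⟩
    | algebraMap r => exact ⟨r, 0, by simp⟩
    | add x y _ _ hx hy =>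
      obtain ⟨u, v, rfl⟩ := hx
      obtain ⟨u', v', rfl⟩ := hy
      exact ⟨u + u', v + v', by push_cast; ring⟩
    | mul x y _ _ hx hy =>
      obtain ⟨u, v, rfl⟩ := hx
      obtain ⟨u', v', rfl⟩ := hy
      refine ⟨u * u' - v * v' * d, u * v' + v * u', ?_⟩
      push_cast
      linear_combination (v * v' : ℂ) * sqrtNeg_sq d

variable (l)

theorem mul_classNumSqrtNeg_eq (hl : 3 < l) (hl4 : l % 4 = 3) :
    (l * classNumSqrtNeg l : ℤ) = |∑ a : ZMod l, (a.val : ℤ) * quadraticChar (ZMod l) a| := by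
  have : FiniteDimensional ℚ ℚ⟮sqrtNeg l⟯ := adjoin.finiteDimensional (isIntegral_sqrtNeg l)
  have : NumberField ℚ⟮sqrtNeg l⟯ := ⟨⟩
  obtain ⟨m, hm⟩ : ∃ m : ℤ, 4 * m - 1 = l := ⟨(l + 1) / 4, by omega⟩
  obtain ⟨w, H⟩ := (isImaginaryQuadratic_adjoin_sqrtNeg l).exists_isQuadraticOrder
    (Fact.out : l.Prime).squarefree hm
  exact H.mul_classNumber_eq hl hm

theorem odd_classNumSqrtNeg (hl : 3 < l) (hl4 : l % 4 = 3) : Odd (classNumSqrtNeg l) := by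
  have := odd_sum_val_mul_quadraticChar hl4
  rw [← odd_abs, ← mul_classNumSqrtNeg_eq l hl hl4, Int.odd_mul] at this
  exact_mod_cast this.2

end ClassNumberFormula

section TraceAddChar

lemma isPrimitiveRoot_zetaP (n : ℕ) [NeZero n] : IsPrimitiveRoot (zetaP n) n :=
  Complex.isPrimitiveRoot_exp n (NeZero.ne n)

variable (p : ℕ) [Fact p.Prime] (F : Type*) [Field F] [Algebra (ZMod p) F]

/-- The additive character `x ↦ ζ_p ^ T(x)` of an extension `F` of `ZMod p`, where `T` is the
trace; the Gauss sums of the theorem are taken with respect to it. -/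
noncomputable def traceAddChar : AddChar F ℂ :=
  (AddChar.zmodChar p (isPrimitiveRoot_zetaP p).pow_eq_one).compAddMonoidHom
    (Algebra.trace (ZMod p) F).toAddMonoidHom

variable {F}

lemma traceAddChar_apply (x : F) :
    traceAddChar p F x = zetaP p ^ (Algebra.trace (ZMod p) F x).val := by
  simp [traceAddChar, AddChar.zmodChar_apply]

lemma isIntegral_zetaP : IsIntegral ℤ (zetaP p) :=
  (isPrimitiveRoot_zetaP p).isIntegral (NeZero.pos p)

lemma isIntegral_traceAddChar (x : F) : IsIntegral ℤ (traceAddChar p F x) := by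
  rw [traceAddChar_apply]
  exact (isIntegral_zetaP p).pow _

variable [Finite F]

variable (F) in
lemma traceAddChar_ne_one : traceAddChar p F ≠ 1 := by
  intro h
  obtain ⟨x, hx⟩ := Algebra.trace_surjective (ZMod p) F 1
  have hζ := traceAddChar_apply p x
  rw [h, hx, ZMod.val_one, pow_one, AddChar.one_apply] at hζ
  exact (isPrimitiveRoot_zetaP p).ne_one (Fact.out : p.Prime).one_lt hζ.symm

variable (F) in
lemma isPrimitive_traceAddChar : (traceAddChar p F).IsPrimitive :=
  AddChar.IsPrimitive.of_ne_one (traceAddChar_ne_one p F)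

lemma gaussSumN_eq_gaussSum {F : Type} [Field F] [Fintype F] [Algebra (ZMod p) F]
    (χ : MulChar F ℂ) (k : ℕ) : gaussSumN p χ k = gaussSum (χ ^ k) (traceAddChar p F) := by
  classical
  simp only [gaussSumN, gaussSum, traceAddChar_apply]
  refine Finset.sum_subset_zero_on_sdiff (Finset.subset_univ _) (fun x hx ↦ ?_) fun _ _ ↦ rfl
  obtain rfl : x = 0 := by simpa using hx
  rw [MulChar.map_zero, zero_mul]

end TraceAddChar

section GaussSum

lemma trace_pow_card {K L : Type*} [Field K] [Fintype K] [Field L] [Algebra K L]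
    [Algebra.IsAlgebraic K L] (x : L) :
    Algebra.trace K L (x ^ Fintype.card K) = Algebra.trace K L x :=
  Algebra.trace_eq_of_algEquiv (FiniteField.frobeniusAlgEquivOfAlgebraic K L) x

lemma gaussSum_mul_gaussSum_inv {F R : Type*} [Field F] [Fintype F] [CommRing R] [IsDomain R]
    {χ : MulChar F R} (hχ : χ ≠ 1) (hχ' : χ (-1) = 1) {ψ : AddChar F R} (hψ : ψ.IsPrimitive) :
    gaussSum χ ψ * gaussSum χ⁻¹ ψ = Fintype.card F := by
  have hinv : χ⁻¹ (-1) = 1 := by rw [MulChar.inv_apply', inv_neg, inv_one, hχ']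
  rw [← gaussSum_mul_gaussSum_eq_card hχ hψ, ← mul_gaussSum_inv_eq_gaussSum χ⁻¹ ψ, hinv, one_mul]

lemma isIntegral_mulChar {F R : Type*} [Field F] [Finite F] [CommRing R] (χ : MulChar F R)
    (x : F) : IsIntegral ℤ (χ x) := by
  have := Fintype.ofFinite F
  rcases eq_or_ne x 0 with rfl | hx
  · rw [MulChar.map_zero]
    exact isIntegral_zero
  · have hpow : χ x ^ (Fintype.card F - 1) = 1 := by
      rw [← map_pow, FiniteField.pow_card_sub_one_eq_one x hx, map_one]
    refine IsIntegral.of_pow (Nat.sub_pos_of_lt (Fintype.one_lt_card (α := F))) ?_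
    rw [hpow]
    exact isIntegral_one

variable (p : ℕ) [Fact p.Prime] {F : Type*} [Field F] [Fintype F] [Algebra (ZMod p) F]

lemma isIntegral_gaussSum (χ : MulChar F ℂ) : IsIntegral ℤ (gaussSum χ (traceAddChar p F)) :=
  IsIntegral.sum _ fun x _ ↦ (isIntegral_mulChar χ x).mul (isIntegral_traceAddChar p x)

lemma gaussSum_pow_char (χ : MulChar F ℂ) :
    gaussSum (χ ^ p) (traceAddChar p F) = gaussSum χ (traceAddChar p F) := by
  have : CharP F p := charP_of_injective_algebraMap (algebraMap (ZMod p) F).injective p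
  rw [gaussSum, gaussSum, ← Function.Bijective.sum_comp (e := fun x : F ↦ x ^ p)
    (bijective_frobenius F p) (fun x ↦ χ x * traceAddChar p F x)]
  refine Finset.sum_congr rfl fun x _ ↦ ?_
  have htrace := trace_pow_card (K := ZMod p) x
  rw [ZMod.card] at htrace
  rw [MulChar.pow_apply' _ (NeZero.ne p), map_pow, traceAddChar_apply, traceAddChar_apply, htrace]

lemma gaussSum_pow_char_pow (χ : MulChar F ℂ) (i : ℕ) :
    gaussSum (χ ^ p ^ i) (traceAddChar p F) = gaussSum χ (traceAddChar p F) := by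
  induction i with
  | zero => simp only [pow_zero, pow_one]
  | succ i ih => rw [pow_succ, pow_mul, gaussSum_pow_char, ih]

lemma sum_mul_traceAddChar_pow {χ : MulChar F ℂ}
    (hχ : ∀ c : ZMod p, c ≠ 0 → χ (algebraMap _ F c) = 1) {c : ℕ} (hc : c.Coprime p) :
    ∑ x : F, χ x * traceAddChar p F x ^ c = gaussSum χ (traceAddChar p F) := by
  have hc0 : (c : ZMod p) ≠ 0 := ((ZMod.isUnit_iff_coprime c p).mpr hc).ne_zero
  have hcF : (c : F) ≠ 0 := by
    rw [← map_natCast (algebraMap (ZMod p) F)]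
    exact (_root_.map_ne_zero _).mpr hc0
  have hχc : χ (c : F) = 1 := by
    rw [← map_natCast (algebraMap (ZMod p) F)]
    exact hχ _ hc0
  rw [gaussSum,
    ← Equiv.sum_comp (Equiv.mulLeft₀ (c : F) hcF) (fun x ↦ χ x * traceAddChar p F x)]
  refine Finset.sum_congr rfl fun x _ ↦ ?_
  rw [show Equiv.mulLeft₀ (c : F) hcF x = c * x from rfl, map_mul, hχc,
    one_mul, ← nsmul_eq_mul, AddChar.map_nsmul_eq_pow]

end GaussSum

section Teichmuller

lemma valuation_le_one_of_isIntegral {K : Type*} [Field K] (V : ValuationSubring K) {x : K}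
    (hx : IsIntegral ℤ x) : V.valuation x ≤ 1 := by
  obtain ⟨y, rfl⟩ := IsIntegrallyClosed.isIntegral_iff.mp (hx.tower_top (A := V))
  exact V.valuation_le_one y

variable {F K : Type*} [Field F] [Field K]

lemma exists_valuation_aeval_lt_one [CharZero K] {m : ℕ} [NeZero (m : F)] {g : F} {ζ : K}
    (hg : IsPrimitiveRoot g m) (hζ : IsPrimitiveRoot ζ m) :
    ∃ V : ValuationSubring K, ∀ P : ℤ[X], aeval g P = 0 → V.valuation (aeval ζ P) < 1 := by
  have hm : 0 < m := Nat.pos_of_ne_zero fun h ↦ NeZero.ne (m : F) (by rw [h, Nat.cast_zero])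
  have hroot : aeval g (cyclotomic m ℤ) = 0 := by
    rw [aeval_def, eval₂_eq_eval_map, map_cyclotomic]
    exact isRoot_cyclotomic_iff.mpr hg
  let θ : ℤ[X] →+* K := (aeval ζ : ℤ[X] →ₐ[ℤ] K).toRingHom
  let I : Ideal θ.range :=
    Ideal.map θ.rangeRestrict (RingHom.ker (aeval g : ℤ[X] →ₐ[ℤ] F).toRingHom)
  have hI : I ≠ ⊤ := by
    rw [Ne, Ideal.eq_top_iff_one, Ideal.mem_map_iff_of_surjective _ θ.rangeRestrict_surjective]
    rintro ⟨P, hPg : aeval g P = 0, hPζ⟩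
    have hP_sub : aeval ζ (P - 1) = 0 := by
      rw [map_sub, map_one, sub_eq_zero]
      exact congrArg Subtype.val hPζ
    obtain ⟨Q, hQ⟩ : cyclotomic m ℤ ∣ P - 1 := by
      rw [cyclotomic_eq_minpoly hζ hm]
      exact minpoly.isIntegrallyClosed_dvd (hζ.isIntegral hm) hP_sub
    have hQg := congrArg (aeval g) hQ
    simp [hroot, hPg] at hQg
  obtain ⟨V, -, hV⟩ := Ideal.image_subset_nonunits_valuationSubring I hI
  exact ⟨V, fun P hP ↦ hV ⟨_, Ideal.mem_map_of_mem _ hP, rfl⟩⟩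

lemma mem_zpowers_of_isPrimitiveRoot_apply [Finite F] {ω : MulChar F K} {g : Fˣ}
    (hg : ∀ x, x ∈ Subgroup.zpowers g) (hω : IsPrimitiveRoot (ω g) (orderOf g)) (χ : MulChar F K) :
    χ ∈ Subgroup.zpowers ω := by
  have : NeZero (orderOf g) := ⟨(orderOf_pos g).ne'⟩
  have hχg : χ g ^ orderOf g = 1 := by
    rw [← map_pow, ← Units.val_pow_eq_pow_val, pow_orderOf_eq_one, Units.val_one, map_one]
  obtain ⟨c, -, hc⟩ := hω.eq_pow_of_pow_eq_one hχg
  refine mem_powers_iff_mem_zpowers.mp ⟨c, (MulChar.eq_iff hg _ _).mpr ?_⟩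
  simpa only [MulChar.pow_apply_coe] using hc

variable [Fintype F]

/-- `ω` is a Teichmüller character of the finite field `F` with respect to the valuation ring `V`:
modulo the maximal ideal of `V`, its values satisfy every linear relation over `ℤ` that holds
among the elements `x` of `F`. Informally `ω x ≡ x`, stated without choosing an embedding of `F`
into the residue field of `V`. -/
def IsTeichmuller (V : ValuationSubring K) (ω : MulChar F K) : Prop :=
  ∀ n : F → ℤ, ∑ x, (n x : F) * x = 0 → V.valuation (∑ x, (n x : K) * ω x) < 1

lemma aeval_sum_units_C_mul_X_pow [Fintype Fˣ] {R : Type*} [CommRing R] {φ : F → R}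
    (hφ0 : φ 0 = 0) {g : Fˣ} {k : Fˣ → ℕ} (hφ : ∀ x : Fˣ, φ x = φ g ^ k x) (n : F → ℤ) :
    aeval (φ g) (∑ x : Fˣ, C (n x) * X ^ k x) = ∑ x, (n x : R) * φ x := by
  classical
  rw [Fintype.sum_eq_add_sum_subtype_ne _ (0 : F), hφ0, mul_zero, zero_add,
    ← Fintype.sum_equiv unitsEquivNeZero _ _ fun x ↦ rfl, map_sum]
  refine Finset.sum_congr rfl fun x _ ↦ ?_
  simp [← hφ]

lemma isTeichmuller_of_valuation_aeval_lt_one {V : ValuationSubring K} {ω : MulChar F K} {g : Fˣ}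
    (hg : ∀ x, x ∈ Subgroup.zpowers g)
    (hV : ∀ P : ℤ[X], aeval (g : F) P = 0 → V.valuation (aeval (ω g) P) < 1) :
    IsTeichmuller V ω := by
  classical
  have hlog (x : Fˣ) : ∃ k : ℕ, g ^ k = x := mem_powers_iff_mem_zpowers.mpr (hg x)
  choose k hk using hlog
  have hgk (x : Fˣ) : (x : F) = (g : F) ^ k x := by rw [← Units.val_pow_eq_pow_val, hk]
  intro n hn
  rw [← aeval_sum_units_C_mul_X_pow ω.map_zero fun x ↦ by rw [← map_pow, ← hgk]]
  exact hV _ ((aeval_sum_units_C_mul_X_pow (φ := id) rfl hgk n).trans hn)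

lemma exists_isTeichmuller (F : Type*) [Field F] [Fintype F] :
    ∃ (V : ValuationSubring ℂ) (ω : MulChar F ℂ),
      IsTeichmuller V ω ∧ ∀ χ, χ ∈ Subgroup.zpowers ω := by
  classical
  obtain ⟨g, hg⟩ := IsCyclic.exists_generator (α := Fˣ)
  have hgF : IsPrimitiveRoot (g : F) (orderOf g) :=
    IsPrimitiveRoot.coe_units_iff.mpr (IsPrimitiveRoot.orderOf g)
  have horder : orderOf g = Fintype.card Fˣ := by
    rw [orderOf_eq_card_of_forall_mem_zpowers hg, Nat.card_eq_fintype_card]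
  have : NeZero ((orderOf g : ℕ) : F) := by
    constructor
    rw [horder, Fintype.card_units, Nat.cast_sub Fintype.card_pos, FiniteField.cast_card_eq_zero]
    simp
  have hpos := orderOf_pos g
  have hζ := Complex.isPrimitiveRoot_exp (orderOf g) hpos.ne'
  have hζmem : (hζ.isUnit hpos.ne').unit ∈ rootsOfUnity (Fintype.card Fˣ) ℂ := by
    rw [_root_.mem_rootsOfUnity, ← horder]
    exact Units.ext hζ.pow_eq_one
  have hω := MulChar.ofRootOfUnity_spec hζmem hg
  obtain ⟨V, hV⟩ := exists_valuation_aeval_lt_one hgF hζ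
  exact ⟨V, MulChar.ofRootOfUnity hζmem hg,
    isTeichmuller_of_valuation_aeval_lt_one hg (by rwa [hω]),
    mem_zpowers_of_isPrimitiveRoot_apply hg (by rwa [hω])⟩

lemma orderOf_mulChar_of_forall_mem_zpowers {ω : MulChar F ℂ}
    (hω : ∀ χ, χ ∈ Subgroup.zpowers ω) : orderOf ω = Fintype.card F - 1 := by
  classical
  rw [orderOf_eq_card_of_forall_mem_zpowers hω, MulChar.card_eq_card_units_of_hasEnoughRootsOfUnity,
    Nat.card_eq_fintype_card, Fintype.card_units]

end Teichmuller

section ValuationOneSub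

variable {K : Type*} [Field K] (V : ValuationSubring K)

lemma valuation_one_sub_pow_le {z : K} (hz : IsIntegral ℤ z) (j : ℕ) :
    V.valuation (1 - z ^ j) ≤ V.valuation (1 - z) := by
  rw [← mul_neg_geom_sum, map_mul]
  exact mul_le_of_le_one_right'
    (valuation_le_one_of_isIntegral V (IsIntegral.sum _ fun i _ ↦ hz.pow i))

lemma valuation_one_sub_pow_of_coprime {ζ : K} {n k : ℕ} [NeZero n] (hζ : IsPrimitiveRoot ζ n)
    (hk : k.Coprime n) : V.valuation (1 - ζ ^ k) = V.valuation (1 - ζ) := by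
  have hint := hζ.isIntegral (NeZero.pos n)
  obtain ⟨i, -, hi⟩ := (hζ.pow_of_coprime k hk).eq_pow_of_pow_eq_one hζ.pow_eq_one
  refine (valuation_one_sub_pow_le V hint k).antisymm ?_
  calc V.valuation (1 - ζ) = V.valuation (1 - (ζ ^ k) ^ i) := by rw [hi]
    _ ≤ V.valuation (1 - ζ ^ k) := valuation_one_sub_pow_le V (hint.pow k) i

lemma valuation_one_sub_pow_sub_one {ζ : K} {p : ℕ} [Fact p.Prime] (hζ : IsPrimitiveRoot ζ p) :
    V.valuation (1 - ζ) ^ (p - 1) = V.valuation p := by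
  have hp : p.Prime := Fact.out
  obtain ⟨n, rfl⟩ := Nat.exists_eq_add_one.mpr hp.pos
  have hunit (k : ℕ) (hk : k ∈ Finset.range n) :
      V.valuation (1 - ζ ^ (k + 1)) = V.valuation (1 - ζ) :=
    valuation_one_sub_pow_of_coprime V hζ (Nat.coprime_of_lt_prime k.succ_ne_zero
      (Nat.succ_lt_succ (Finset.mem_range.mp hk)) hp).symm
  rw [Nat.cast_add_one, ← hζ.prod_one_sub_pow_eq_order, map_prod, Finset.prod_congr rfl hunit,
    Finset.prod_const, Finset.card_range, Nat.add_sub_cancel]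

end ValuationOneSub

section FirstGaussSum

lemma exists_isIntegral_one_sub_pow_eq {A : Type*} [CommRing A] {x : A} (hx : IsIntegral ℤ x)
    (t : ℕ) : ∃ y : A, IsIntegral ℤ y ∧ (1 - x) ^ t = 1 - t * x + x ^ 2 * y := by
  obtain ⟨y, hy⟩ := Polynomial.powAddExpansion (1 : integralClosure ℤ A) (-⟨x, hx⟩) t
  refine ⟨y, y.2, ?_⟩
  have hyA := congrArg (algebraMap _ A) hy
  simp only [one_pow, mul_one, even_two, Even.neg_pow, map_add, map_mul, map_pow, map_neg, map_one,
    map_natCast] at hyA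
  change (1 + -x) ^ t = 1 + t * -x + y * x ^ 2 at hyA
  linear_combination hyA

lemma sum_trace_mul_inv (K L : Type*) [Field K] [Finite K] [Field L] [Fintype L] [Algebra K L] :
    ∑ x : L, algebraMap K L (Algebra.trace K L x) * x⁻¹ = -1 := by
  classical
  have hK : 1 < Nat.card K := Finite.one_lt_card
  simp only [FiniteField.algebraMap_trace_eq_sum_pow, Finset.sum_mul]
  rw [Finset.sum_comm, Finset.sum_eq_single 0]
  · have hx (x : L) : x ^ Nat.card K ^ 0 * x⁻¹ = 1 - if x = 0 then 1 else 0 := by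
      by_cases hx : x = 0 <;> simp [hx]
    simp only [hx]
    simp
  · intro i hi hi0
    have hpos : 1 < Nat.card K ^ i := Nat.one_lt_pow hi0 hK
    have hlt : Nat.card K ^ i < Fintype.card L := by
      rw [← Nat.card_eq_fintype_card, Module.natCard_eq_pow_finrank (K := K) (V := L)]
      exact Nat.pow_lt_pow_right hK (Finset.mem_range.mp hi)
    rw [← FiniteField.sum_pow_lt_card_sub_one L (Nat.card K ^ i - 1) (by omega)]
    refine Finset.sum_congr rfl fun x _ ↦ ?_
    rcases eq_or_ne x 0 with rfl | hx
    · rw [inv_zero, mul_zero, zero_pow (by omega)]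
    · rw [pow_sub₀ x hx hpos.le, pow_one]
  · intro h
    exact absurd (Finset.mem_range.mpr Module.finrank_pos) h

variable (p : ℕ) [Fact p.Prime] {F : Type*} [Field F] [Fintype F] [Algebra (ZMod p) F]

lemma exists_isIntegral_gaussSum_add_eq {χ : MulChar F ℂ} (hχ : χ ≠ 1) :
    ∃ z : ℂ, IsIntegral ℤ z ∧ gaussSum χ (traceAddChar p F) +
      (1 - zetaP p) * ∑ x, χ x * (Algebra.trace (ZMod p) F x).val = (1 - zetaP p) ^ 2 * z := by
  choose y hy hyt using
    exists_isIntegral_one_sub_pow_eq (isIntegral_one.sub (isIntegral_zetaP p))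
  refine ⟨∑ x : F, χ x * y (Algebra.trace (ZMod p) F x).val,
    IsIntegral.sum _ fun x _ ↦ (isIntegral_mulChar χ x).mul (hy _), ?_⟩
  rw [gaussSum, Finset.mul_sum, Finset.mul_sum, ← Finset.sum_add_distrib, ← sub_eq_zero,
    ← Finset.sum_sub_distrib, ← MulChar.sum_eq_zero_of_ne_one hχ]
  refine Finset.sum_congr rfl fun x _ ↦ ?_
  have hψ := hyt (Algebra.trace (ZMod p) F x).val
  rw [sub_sub_cancel, ← traceAddChar_apply] at hψ
  rw [hψ]
  ring

variable {V : ValuationSubring ℂ} {ω : MulChar F ℂ}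

lemma IsTeichmuller.valuation_prime_lt_one (hω : IsTeichmuller V ω) : V.valuation p < 1 := by
  classical
  have : CharP F p := charP_of_injective_algebraMap (algebraMap (ZMod p) F).injective p
  simpa [apply_ite] using hω (fun x ↦ if x = 1 then p else 0) (by simp [apply_ite])

lemma IsTeichmuller.valuation_one_sub_zetaP_lt_one (hω : IsTeichmuller V ω) :
    V.valuation (1 - zetaP p) < 1 := by
  by_contra! hle
  refine (hω.valuation_prime_lt_one p).not_ge ?_
  rw [← valuation_one_sub_pow_sub_one V (isPrimitiveRoot_zetaP p)]
  exact one_le_pow₀ hle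

lemma IsTeichmuller.valuation_sum_inv_mul_trace_add_one_lt_one (hω : IsTeichmuller V ω) :
    V.valuation (∑ x, ω⁻¹ x * (Algebra.trace (ZMod p) F x).val + 1) < 1 := by
  classical
  set tr : F → ℕ := fun x ↦ (Algebra.trace (ZMod p) F x).val with htr
  have htrF (x : F) : (tr x : F) = algebraMap (ZMod p) F (Algebra.trace (ZMod p) F x) := by
    rw [htr, ← map_natCast (algebraMap (ZMod p) F), ZMod.natCast_zmod_val]
  have hsum : ∑ x : F, (tr x⁻¹ : F) * x = -1 := by
    rw [← sum_trace_mul_inv (ZMod p) F, ← Equiv.sum_comp (Equiv.inv F)]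
    simp [htrF]
  convert! hω (fun x ↦ tr x⁻¹ + if x = 1 then 1 else 0)
    (by simp [add_mul, Finset.sum_add_distrib, hsum]) using 2
  rw [← Equiv.sum_comp (Equiv.inv F)]
  simp [mul_add, Finset.sum_add_distrib, MulChar.inv_apply', mul_comm _ (ω _), htr]

lemma IsTeichmuller.valuation_gaussSum_inv (hω : IsTeichmuller V ω) (hω1 : ω ≠ 1) :
    V.valuation (gaussSum ω⁻¹ (traceAddChar p F)) = V.valuation (1 - zetaP p) := by
  set S := ∑ x, ω⁻¹ x * (Algebra.trace (ZMod p) F x).val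
  set π := 1 - zetaP p
  obtain ⟨z, hz, hG⟩ := exists_isIntegral_gaussSum_add_eq p (inv_ne_one.mpr hω1)
  have hS : V.valuation S = 1 := by
    have hlt := hω.valuation_sum_inv_mul_trace_add_one_lt_one p
    rw [← sub_neg_eq_add, ← map_one V.valuation, ← V.valuation.map_neg 1] at hlt
    rw [V.valuation.map_eq_of_sub_lt hlt, Valuation.map_neg, map_one]
  have hπ1 : V.valuation π < 1 := hω.valuation_one_sub_zetaP_lt_one p
  have hπ0 : 0 < V.valuation π := by
    rw [zero_lt_iff, Valuation.ne_zero_iff, sub_ne_zero]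
    exact ((isPrimitiveRoot_zetaP p).ne_one (Fact.out : p.Prime).one_lt).symm
  have hlt : V.valuation (gaussSum ω⁻¹ (traceAddChar p F) - -(π * S)) <
      V.valuation (-(π * S)) := by
    rw [sub_neg_eq_add, hG, Valuation.map_neg, map_mul, map_mul, map_pow, hS, mul_one, sq]
    calc V.valuation π * V.valuation π * V.valuation z
        ≤ V.valuation π * V.valuation π :=
          mul_le_of_le_one_right' (valuation_le_one_of_isIntegral V hz)
      _ < V.valuation π := mul_lt_of_lt_one_right hπ0 hπ1
  rw [V.valuation.map_eq_of_sub_lt hlt, Valuation.map_neg, map_mul, hS, mul_one]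

end FirstGaussSum

section Digits

/-- The `i`-th digit after the point, counting from `0`, of the base `b` expansion of `t / N`,
for `t < N`. -/
def fracDigit (b N t i : ℕ) : ℕ := b * (b ^ i * t % N) / N

variable {b N t : ℕ}

lemma mul_fracDigit_add_mod (i : ℕ) :
    N * fracDigit b N t i + b ^ (i + 1) * t % N = b * (b ^ i * t % N) := by
  have hmod : b ^ (i + 1) * t % N = b * (b ^ i * t % N) % N := by
    rw [pow_succ', mul_assoc, Nat.mul_mod_mod]
  rw [fracDigit, hmod, Nat.div_add_mod]

lemma mul_sum_fracDigit_mul_pow_add_mod (ht : t < N) (n : ℕ) :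
    N * ∑ i ∈ Finset.range n, fracDigit b N t i * b ^ (n - 1 - i) + b ^ n * t % N = b ^ n * t := by
  induction n with
  | zero => simp [Nat.mod_eq_of_lt ht]
  | succ n ih =>
    have hsum : ∑ i ∈ Finset.range n, fracDigit b N t i * b ^ (n - i) =
        b * ∑ i ∈ Finset.range n, fracDigit b N t i * b ^ (n - 1 - i) := by
      rw [Finset.mul_sum]
      refine Finset.sum_congr rfl fun i hi ↦ ?_
      have hi := Finset.mem_range.mp hi
      rw [show n - i = n - 1 - i + 1 by omega]
      ring
    rw [Finset.sum_range_succ, Nat.add_sub_cancel, hsum, Nat.sub_self]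
    linear_combination b * ih + mul_fracDigit_add_mod (b := b) (N := N) (t := t) n

variable {M f : ℕ}

lemma pow_mul_mod_of_mul_add_one_eq (ht : t < N) (hM : N * M + 1 = b ^ f) : b ^ f * t % N = t := by
  rw [← hM, add_mul, one_mul, mul_assoc, Nat.mul_add_mod, Nat.mod_eq_of_lt ht]

lemma sum_fracDigit_mul_pow (ht : t < N) (hM : N * M + 1 = b ^ f) :
    ∑ i ∈ Finset.range f, fracDigit b N t i * b ^ (f - 1 - i) = t * M := by
  have hdigits := mul_sum_fracDigit_mul_pow_add_mod (b := b) ht f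
  rw [pow_mul_mod_of_mul_add_one_eq ht hM, ← hM] at hdigits
  refine Nat.eq_of_mul_eq_mul_left (t.zero_le.trans_lt ht) ?_
  linear_combination hdigits

lemma mul_sum_fracDigit (ht : t < N) (hM : N * M + 1 = b ^ f) :
    N * ∑ i ∈ Finset.range f, fracDigit b N t i =
      (b - 1) * ∑ i ∈ Finset.range f, (b ^ i * t % N) := by
  have hshift := (Finset.sum_range_succ' (fun i ↦ b ^ i * t % N) f).symm
  rw [Finset.sum_range_succ, pow_mul_mod_of_mul_add_one_eq ht hM, pow_zero, one_mul,
    Nat.mod_eq_of_lt ht, Nat.add_right_cancel_iff] at hshift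
  have hsum := Finset.sum_congr rfl fun i (_ : i ∈ Finset.range f) ↦
    mul_fracDigit_add_mod (b := b) (N := N) (t := t) i
  rw [Finset.sum_add_distrib, ← Finset.mul_sum, ← Finset.mul_sum, hshift] at hsum
  rw [Nat.sub_mul, one_mul]
  exact Nat.eq_sub_of_add_eq hsum

end Digits

section Stickelberger

variable (p : ℕ) [Fact p.Prime] {F : Type*} [Field F] [Fintype F] [Algebra (ZMod p) F]
  {V : ValuationSubring ℂ}

lemma valuation_gaussSum_le_one (χ : MulChar F ℂ) :
    V.valuation (gaussSum χ (traceAddChar p F)) ≤ 1 :=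
  valuation_le_one_of_isIntegral V (isIntegral_gaussSum p χ)

lemma valuation_gaussSum_one : V.valuation (gaussSum (1 : MulChar F ℂ) (traceAddChar p F)) = 1 := by
  rw [gaussSum_one_left (traceAddChar_ne_one p F), Valuation.map_neg, map_one]

lemma valuation_gaussSum_mul_le (χ φ : MulChar F ℂ) :
    V.valuation (gaussSum χ (traceAddChar p F)) * V.valuation (gaussSum φ (traceAddChar p F)) ≤
      V.valuation (gaussSum (χ * φ) (traceAddChar p F)) := by
  by_cases h : χ * φ = 1
  · rw [h, valuation_gaussSum_one]
    exact mul_le_one' (valuation_gaussSum_le_one p χ) (valuation_gaussSum_le_one p φ)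
  · rw [← map_mul, ← jacobiSum_mul_nontrivial h, map_mul]
    exact mul_le_of_le_one_right' (valuation_le_one_of_isIntegral V (IsIntegral.sum _ fun x _ ↦
      (isIntegral_mulChar χ x).mul (isIntegral_mulChar φ _)))

lemma valuation_gaussSum_pow_le (χ : MulChar F ℂ) (n : ℕ) :
    V.valuation (gaussSum χ (traceAddChar p F)) ^ n ≤
      V.valuation (gaussSum (χ ^ n) (traceAddChar p F)) := by
  induction n with
  | zero => simp only [pow_zero, valuation_gaussSum_one, le_refl]
  | succ n ih =>
    rw [pow_succ, pow_succ]
    exact (mul_le_mul_left ih _).trans (valuation_gaussSum_mul_le p _ _)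

lemma valuation_gaussSum_pow_sum_le (χ : MulChar F ℂ) (n : ℕ) (d e : ℕ → ℕ) :
    V.valuation (gaussSum χ (traceAddChar p F)) ^ (∑ i ∈ Finset.range n, d i) ≤
      V.valuation (gaussSum (χ ^ (∑ i ∈ Finset.range n, d i * p ^ e i)) (traceAddChar p F)) := by
  induction n with
  | zero => simp [valuation_gaussSum_one]
  | succ n ih =>
    rw [Finset.sum_range_succ, Finset.sum_range_succ, pow_add, pow_add]
    refine (mul_le_mul' ih ?_).trans (valuation_gaussSum_mul_le p _ _)
    rw [mul_comm (d n), pow_mul, ← gaussSum_pow_char_pow p χ (e n)]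
    exact valuation_gaussSum_pow_le p _ _

/-- One half of Stickelberger's theorem: `v_p (G (ω ^ (-tM))) ≤ N⁻¹ ∑_{i < f} (p ^ i t mod N)`. -/
lemma IsTeichmuller.valuation_prime_pow_le {ω : MulChar F ℂ} (hω : IsTeichmuller V ω) (hω1 : ω ≠ 1)
    {N M f t : ℕ} (hM : N * M + 1 = p ^ f) (ht : t < N) :
    V.valuation (p : ℂ) ^ (∑ i ∈ Finset.range f, (p ^ i * t % N)) ≤
      V.valuation (gaussSum (ω⁻¹ ^ (t * M)) (traceAddChar p F)) ^ N := by
  rw [← valuation_one_sub_pow_sub_one V (isPrimitiveRoot_zetaP p), ← pow_mul,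
    ← mul_sum_fracDigit ht hM, ← sum_fracDigit_mul_pow ht hM, mul_comm N, pow_mul,
    ← hω.valuation_gaussSum_inv p hω1]
  exact pow_le_pow_left' (valuation_gaussSum_pow_sum_le p _ _ _ _) _

end Stickelberger

section IndexTwoSubgroup

variable {G : Type*} [Group G] {u e : G}

lemma mul_pow_ne_pow (he : orderOf e = 2) (hu : Odd (orderOf u)) (i j : ℕ) : e * u ^ i ≠ u ^ j := by
  intro h
  have hmem : e ∈ Subgroup.zpowers u := by
    rw [eq_mul_inv_of_mul_eq h]
    exact mul_mem (Subgroup.npow_mem_zpowers u j) (inv_mem (Subgroup.npow_mem_zpowers u i))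
  have hdvd := orderOf_dvd_of_mem_zpowers hmem
  rw [he] at hdvd
  exact hu.not_two_dvd_nat hdvd

variable [Fintype G]

lemma bijective_pow_mul_sign (he : orderOf e = 2) (hu : Odd (orderOf u))
    (hcard : Fintype.card G = 2 * orderOf u) (t : G) :
    Function.Bijective fun x : Fin (orderOf u) × Bool ↦
      (if x.2 then e else 1) * (u ^ (x.1 : ℕ) * t) := by
  have hinj (i j : Fin (orderOf u)) (h : u ^ (i : ℕ) * t = u ^ (j : ℕ) * t) : i = j :=
    Fin.ext (pow_injOn_Iio_orderOf i.2 j.2 (mul_right_cancel h))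
  have hne (i j : ℕ) (h : e * (u ^ i * t) = u ^ j * t) : False :=
    mul_pow_ne_pow he hu i j (mul_right_cancel (b := t) (by rw [mul_assoc, h]))
  rw [Fintype.bijective_iff_injective_and_card]
  refine ⟨?_, by simp [hcard, mul_comm]⟩
  rintro ⟨i, _ | _⟩ ⟨j, _ | _⟩ h <;> simp only [if_true, Bool.false_eq_true, if_false, one_mul] at h
  · rw [hinj i j h]
  · exact (hne _ _ h.symm).elim
  · exact (hne _ _ h).elim
  · rw [hinj i j (mul_left_cancel h)]

lemma sum_eq_sum_range_orderOf {A : Type*} [AddCommMonoid A] (he : orderOf e = 2)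
    (hu : Odd (orderOf u)) (hcard : Fintype.card G = 2 * orderOf u) (t : G) (g : G → A) :
    ∑ x, g x = ∑ i ∈ Finset.range (orderOf u), (g (u ^ i * t) + g (e * (u ^ i * t))) := by
  rw [← (bijective_pow_mul_sign he hu hcard t).sum_comp, Fintype.sum_prod_type, Finset.sum_range]
  refine Finset.sum_congr rfl fun i _ ↦ ?_
  simp [add_comm]

end IndexTwoSubgroup

section SumOfResidues

lemma sum_zmod_eq_sum_range {A : Type*} [AddCommMonoid A] (n : ℕ) [NeZero n] (g : ZMod n → A) :
    ∑ a, g a = ∑ i ∈ Finset.range n, g i :=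
  Finset.sum_bij (fun a _ ↦ a.val) (fun a _ ↦ Finset.mem_range.mpr a.val_lt)
    (fun _ _ _ _ h ↦ ZMod.val_injective n h)
    (fun i hi ↦ ⟨i, Finset.mem_univ _, ZMod.val_cast_of_lt (Finset.mem_range.mp hi)⟩) (by simp)

lemma sum_val_mul_eq_sum_range (n : ℕ) [NeZero n] (g : ZMod n → ℤ) :
    ∑ a : ZMod n, (a.val : ℤ) * g a = ∑ i ∈ Finset.range n, (i : ℤ) * g i := by
  rw [sum_zmod_eq_sum_range]
  refine Finset.sum_congr rfl fun i hi ↦ ?_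
  rw [ZMod.val_cast_of_lt (Finset.mem_range.mp hi)]

lemma sum_range_mul_mul_of_periodic {l : ℕ} {g : ℕ → ℤ} (hg : Function.Periodic g l)
    (hg0 : ∑ i ∈ Finset.range l, g i = 0) (k : ℕ) :
    ∑ i ∈ Finset.range (l * k), (i : ℤ) * g i = k * ∑ i ∈ Finset.range l, (i : ℤ) * g i := by
  induction k with
  | zero => simp
  | succ k ih =>
    have hblock : ∑ i ∈ Finset.range l, ((l * k + i : ℕ) : ℤ) * g (l * k + i) =
        l * k * ∑ i ∈ Finset.range l, g i + ∑ i ∈ Finset.range l, (i : ℤ) * g i := by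
      rw [Finset.mul_sum, ← Finset.sum_add_distrib]
      refine Finset.sum_congr rfl fun i _ ↦ ?_
      have hper : g (i + k * l) = g i := by simpa using hg.nat_mul k i
      rw [add_comm (l * k) i, mul_comm l k, hper]
      push_cast
      ring
    rw [mul_add, mul_one, Finset.sum_range_add, ih, hblock, hg0]
    push_cast
    ring

lemma sum_val_mul_castHom {l k N : ℕ} [NeZero l] [NeZero N] (hN : N = l * k) (hlN : l ∣ N)
    {g : ZMod l → ℤ} (hg : ∑ a, g a = 0) :
    ∑ a : ZMod N, (a.val : ℤ) * g (ZMod.castHom hlN (ZMod l) a) =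
      k * ∑ a : ZMod l, (a.val : ℤ) * g a := by
  rw [sum_zmod_eq_sum_range] at hg
  rw [sum_val_mul_eq_sum_range, sum_val_mul_eq_sum_range]
  simp only [map_natCast]
  rw [hN]
  exact sum_range_mul_mul_of_periodic (fun i ↦ by simp) hg k

variable {l r : ℕ} [Fact l.Prime]

lemma isUnit_of_castHom_ne_zero (hl : l ∣ l ^ r) {a : ZMod (l ^ r)}
    (ha : ZMod.castHom hl (ZMod l) a ≠ 0) : IsUnit a := by
  rw [← ZMod.natCast_zmod_val a, map_natCast, Ne, ZMod.natCast_eq_zero_iff] at ha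
  rw [← ZMod.natCast_zmod_val a, ZMod.isUnit_iff_coprime]
  exact (((Fact.out : l.Prime).coprime_iff_not_dvd.mpr ha).pow_left r).symm

lemma sum_units_val_mul_quadraticChar (hl2 : l ≠ 2) (hr : r ≠ 0) (hl : l ∣ l ^ r) :
    ∑ u : (ZMod (l ^ r))ˣ, ((u : ZMod (l ^ r)).val : ℤ) *
        quadraticChar (ZMod l) (ZMod.castHom hl (ZMod l) u) =
      l ^ (r - 1) * ∑ a : ZMod l, (a.val : ℤ) * quadraticChar (ZMod l) a := by
  have hsum : ∑ a, quadraticChar (ZMod l) a = 0 :=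
    quadraticChar_sum_zero (by rwa [ZMod.ringChar_zmod_n])
  rw [← Nat.cast_pow, ← sum_val_mul_castHom (mul_pow_sub_one hr l).symm hl hsum]
  refine Fintype.sum_of_injective Units.val Units.val_injective _ _ (fun a ha ↦ ?_) fun _ ↦ rfl
  have ha0 : ZMod.castHom hl (ZMod l) a = 0 := by
    by_contra h
    exact ha ⟨(isUnit_of_castHom_ne_zero hl h).unit, rfl⟩
  rw [ha0, quadraticChar_zero, mul_zero]

end SumOfResidues

section CosetValSum

variable {N : ℕ}

lemma orderOf_neg_one_units (hN : 2 < N) : orderOf (-1 : (ZMod N)ˣ) = 2 := by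
  have : Fact (2 < N) := ⟨hN⟩
  refine orderOf_eq_prime neg_one_sq fun h ↦ ZMod.neg_one_ne_one (n := N) ?_
  simpa using congrArg Units.val h

/-- The sum of the least nonnegative residues modulo `N` of the elements of the coset `⟨u⟩ t`. -/
noncomputable def cosetValSum (u t : (ZMod N)ˣ) : ℕ :=
  ∑ i ∈ Finset.range (orderOf u), ((u ^ i * t : (ZMod N)ˣ) : ZMod N).val

lemma cosetValSum_eq_sum_mod [NeZero N] {u : (ZMod N)ˣ} {p : ℕ} (hu : (u : ZMod N) = p)
    (t : (ZMod N)ˣ) :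
    cosetValSum u t = ∑ i ∈ Finset.range (orderOf u), (p ^ i * (t : ZMod N).val % N) := by
  refine Finset.sum_congr rfl fun i _ ↦ ?_
  rw [← ZMod.val_natCast, Nat.cast_mul, Nat.cast_pow, ← hu, ZMod.natCast_zmod_val, Units.val_mul,
    Units.val_pow_eq_pow_val]

lemma val_add_val_neg [Fact (1 < N)] (t : (ZMod N)ˣ) :
    (t : ZMod N).val + ((-t : (ZMod N)ˣ) : ZMod N).val = N := by
  have : NeZero N := ⟨(Fact.out : 1 < N).ne_bot⟩
  have : NeZero (t : ZMod N) := ⟨t.ne_zero⟩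
  rw [Units.val_neg, ZMod.val_neg_of_ne_zero, Nat.add_sub_cancel' (ZMod.val_le _)]

lemma cosetValSum_add_neg [Fact (1 < N)] (u t : (ZMod N)ˣ) :
    cosetValSum u t + cosetValSum u (-t) = N * orderOf u := by
  simp only [cosetValSum, ← Finset.sum_add_distrib, mul_neg, val_add_val_neg, Finset.sum_const,
    Finset.card_range, smul_eq_mul, mul_comm]

variable {l r : ℕ} [Fact l.Prime]

lemma quadraticChar_eq_one_of_odd_orderOf (hl : l ∣ N) {u : (ZMod N)ˣ} (hu : Odd (orderOf u)) :
    quadraticChar (ZMod l) (ZMod.castHom hl (ZMod l) u) = 1 := by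
  have hne : ZMod.castHom hl (ZMod l) u ≠ 0 := (u.isUnit.map (ZMod.castHom hl (ZMod l))).ne_zero
  have hpow : quadraticChar (ZMod l) (ZMod.castHom hl (ZMod l) u) ^ orderOf u = 1 := by
    rw [← map_pow, ← map_pow, ← Units.val_pow_eq_pow_val, pow_orderOf_eq_one, Units.val_one,
      map_one, map_one]
  refine (quadraticChar_dichotomy hne).resolve_right fun h ↦ ?_
  rw [h, hu.neg_one_pow] at hpow
  norm_num at hpow

lemma abs_cosetValSum_sub_neg (hl3 : 3 < l) (hl4 : l % 4 = 3) (hr : r ≠ 0)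
    {u : (ZMod (l ^ r))ˣ} (hu : Odd (orderOf u)) (hindex : (l ^ r).totient = 2 * orderOf u)
    (t : (ZMod (l ^ r))ˣ) :
    |(cosetValSum u t : ℤ) - cosetValSum u (-t)| = l ^ r * classNumSqrtNeg l := by
  have hl : l ∣ l ^ r := dvd_pow_self l hr
  set θ := ZMod.castHom hl (ZMod l)
  have : Fact (1 < l ^ r) := ⟨Nat.one_lt_pow hr (by omega)⟩
  have hneg := orderOf_neg_one_units (hl3.le.trans (Nat.le_self_pow hr l))
  have hcoset (i : ℕ) : quadraticChar (ZMod l) (θ (u ^ i * t : (ZMod (l ^ r))ˣ)) =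
      quadraticChar (ZMod l) (θ t) := by
    rw [Units.val_mul, Units.val_pow_eq_pow_val, map_mul, map_mul, map_pow, map_pow,
      quadraticChar_eq_one_of_odd_orderOf hl hu, one_pow, one_mul]
  have hsum := sum_eq_sum_range_orderOf hneg hu (by rw [ZMod.card_units_eq_totient, hindex]) t
    fun v : (ZMod (l ^ r))ˣ ↦ ((v : ZMod (l ^ r)).val : ℤ) * quadraticChar (ZMod l) (θ v)
  have hdiff : (l : ℤ) ^ (r - 1) * ∑ a : ZMod l, (a.val : ℤ) * quadraticChar (ZMod l) a =
      quadraticChar (ZMod l) (θ t) * ((cosetValSum u t : ℤ) - cosetValSum u (-t)) := by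
    rw [← sum_units_val_mul_quadraticChar (by omega) hr hl, hsum, cosetValSum, cosetValSum,
      Nat.cast_sum, Nat.cast_sum, ← Finset.sum_sub_distrib, Finset.mul_sum]
    refine Finset.sum_congr rfl fun i _ ↦ ?_
    rw [neg_one_mul, mul_neg, Units.val_neg, map_neg, neg_eq_neg_one_mul (θ _), map_mul,
      quadraticChar_neg_one_of_three_mod_four hl4, hcoset]
    ring
  have hsign : |quadraticChar (ZMod l) (θ t)| = 1 := by
    rcases quadraticChar_dichotomy (t.isUnit.map θ).ne_zero with h | h <;> simp [h]
  calc |(cosetValSum u t : ℤ) - cosetValSum u (-t)|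
      = |(l : ℤ) ^ (r - 1) * ∑ a : ZMod l, (a.val : ℤ) * quadraticChar (ZMod l) a| := by
        rw [hdiff, abs_mul, hsign, one_mul]
    _ = l ^ (r - 1) * (l * classNumSqrtNeg l) := by
        rw [abs_mul, abs_of_nonneg (by positivity), mul_classNumSqrtNeg_eq l hl3 hl4]
    _ = l ^ r * classNumSqrtNeg l := by
        rw [← mul_assoc, ← pow_succ, Nat.sub_add_cancel (Nat.pos_of_ne_zero hr)]

end CosetValSum

section Totient

lemma odd_totient_div_two {l r : ℕ} (hl : l.Prime) (hl4 : l % 4 = 3) (hr : r ≠ 0) :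
    Odd ((l ^ r).totient / 2) := by
  obtain ⟨k, rfl⟩ : ∃ k, l = 4 * k + 3 := ⟨l / 4, by omega⟩
  rw [Nat.totient_prime_pow hl (Nat.pos_of_ne_zero hr),
    show 4 * k + 3 - 1 = 2 * (2 * k + 1) by omega, mul_left_comm, Nat.mul_div_cancel_left _ two_pos]
  exact (Odd.pow ⟨2 * k + 1, by ring⟩).mul ⟨k, rfl⟩

end Totient

section CyclicGroup

variable {G : Type*} [Group G] {N M : ℕ} {ω χ : G}

lemma exists_unit_eq_pow_val_mul [NeZero N] (hM : M ≠ 0) (hω : orderOf ω = N * M)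
    (hχ : χ ∈ Subgroup.zpowers ω) (hχN : orderOf χ = N) :
    ∃ t : (ZMod N)ˣ, χ = ω ^ ((t : ZMod N).val * M) := by
  have hfin : IsOfFinOrder ω := orderOf_pos_iff.mp (by
    rw [hω]
    exact Nat.mul_pos (NeZero.pos N) (Nat.pos_of_ne_zero hM))
  obtain ⟨k, rfl : ω ^ k = χ⟩ := hfin.mem_powers_iff_mem_zpowers.mpr hχ
  obtain ⟨s, rfl⟩ : M ∣ k := by
    have hdvd : orderOf ω ∣ k * N := orderOf_dvd_of_pow_eq_one <| by
      rw [pow_mul, ← hχN, pow_orderOf_eq_one]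
    rw [hω, mul_comm k] at hdvd
    exact Nat.dvd_of_mul_dvd_mul_left (NeZero.pos N) hdvd
  have hωM : orderOf (ω ^ M) = N := by
    rw [orderOf_pow_of_dvd hM (hω ▸ dvd_mul_left M N), hω,
      Nat.mul_div_cancel _ (Nat.pos_of_ne_zero hM)]
  have hcop : s.Coprime N := by
    rw [pow_mul, hfin.pow.orderOf_pow, hωM, Nat.div_eq_self] at hχN
    exact Nat.coprime_comm.mp (hχN.resolve_left (NeZero.ne N))
  refine ⟨ZMod.unitOfCoprime s hcop, ?_⟩
  rw [ZMod.coe_unitOfCoprime, ZMod.val_natCast, mul_comm _ M, pow_mul, pow_mul, ← pow_mod_orderOf,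
    hωM]

lemma inv_pow_val_mul [Fact (1 < N)] (hω : orderOf ω = N * M) (t : (ZMod N)ˣ) :
    (ω ^ ((t : ZMod N).val * M))⁻¹ = ω ^ (((-t : (ZMod N)ˣ) : ZMod N).val * M) := by
  rw [inv_eq_iff_mul_eq_one, ← pow_add, ← add_mul, val_add_val_neg, ← hω, pow_orderOf_eq_one]

end CyclicGroup

section ValuationOfGaussSum

lemma apply_neg_one_of_odd_orderOf {R R' : Type*} [CommRing R] [Finite Rˣ] [CommRing R']
    {χ : MulChar R R'} (hχ : Odd (orderOf χ)) : χ (-1) = 1 := by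
  have hsq : χ (-1) ^ 2 = 1 := by rw [← map_pow, neg_one_sq, map_one]
  have hpow : χ (-1) ^ orderOf χ = 1 := by
    rw [← MulChar.pow_apply' _ hχ.pos.ne', pow_orderOf_eq_one, MulChar.one_apply isUnit_one.neg]
  obtain ⟨k, hk⟩ := hχ
  rwa [hk, pow_succ, pow_mul, hsq, one_pow, one_mul] at hpow

variable {p : ℕ} [Fact p.Prime] {F : Type*} [Field F] [Fintype F] [Algebra (ZMod p) F]

lemma IsTeichmuller.exists_valuation_prime_pow_cosetValSum_le {V : ValuationSubring ℂ}
    {ω : MulChar F ℂ} (hω : IsTeichmuller V ω) (hall : ∀ χ, χ ∈ Subgroup.zpowers ω) {N : ℕ}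
    [Fact (1 < N)] {u : (ZMod N)ˣ} (hu : (u : ZMod N) = p)
    (hcard : Fintype.card F = p ^ orderOf u) {χ : MulChar F ℂ} (hχ : orderOf χ = N) :
    ∃ t : (ZMod N)ˣ,
      V.valuation (p : ℂ) ^ cosetValSum u t ≤
        V.valuation (gaussSum χ (traceAddChar p F)) ^ N ∧
      V.valuation (p : ℂ) ^ cosetValSum u (-t) ≤
        V.valuation (gaussSum χ⁻¹ (traceAddChar p F)) ^ N := by
  have hN : 1 < N := Fact.out
  have : NeZero N := ⟨hN.ne_bot⟩
  have hpos : 1 ≤ p ^ orderOf u := Nat.one_le_pow _ _ (Fact.out : p.Prime).pos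
  obtain ⟨M, hM⟩ : N ∣ p ^ orderOf u - 1 := by
    rw [← ZMod.natCast_eq_zero_iff, Nat.cast_sub hpos, Nat.cast_pow, ← hu,
      ← Units.val_pow_eq_pow_val, pow_orderOf_eq_one, Units.val_one, Nat.cast_one, sub_self]
  have hcardM : N * M + 1 = p ^ orderOf u := by rw [← hM, Nat.sub_add_cancel hpos]
  have hωM : orderOf ω⁻¹ = N * M := by
    rw [orderOf_inv, orderOf_mulChar_of_forall_mem_zpowers hall, hcard, hM]
  have hM0 : M ≠ 0 := by
    rintro rfl
    rw [mul_zero, zero_add, ← hcard] at hcardM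
    exact (Fintype.one_lt_card (α := F)).ne hcardM
  have hω1 : ω ≠ 1 := by
    rintro rfl
    rw [inv_one, orderOf_one] at hωM
    exact hN.ne (Nat.eq_one_of_mul_eq_one_right hωM.symm).symm
  have hlower (s : (ZMod N)ˣ) : V.valuation (p : ℂ) ^ cosetValSum u s ≤
      V.valuation (gaussSum (ω⁻¹ ^ ((s : ZMod N).val * M)) (traceAddChar p F)) ^ N := by
    rw [cosetValSum_eq_sum_mod hu]
    exact hω.valuation_prime_pow_le p hω1 hcardM (ZMod.val_lt _)
  obtain ⟨t, rfl⟩ := exists_unit_eq_pow_val_mul hM0 hωM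
    (by rw [Subgroup.zpowers_inv]; exact hall χ) hχ
  exact ⟨t, hlower t, (inv_pow_val_mul hωM t).symm ▸ hlower (-t)⟩

/-- Stickelberger's theorem for `p`-adic valuations. The two lower bounds of
`IsTeichmuller.exists_valuation_prime_pow_cosetValSum_le` are equalities because
`G(χ) G(χ⁻¹) = p ^ f`. -/
lemma exists_valuation_gaussSum_pow_eq {N : ℕ} [Fact (1 < N)] {u : (ZMod N)ˣ}
    (hu : (u : ZMod N) = p) (hcard : Fintype.card F = p ^ orderOf u) {χ : MulChar F ℂ}
    (hχ : orderOf χ = N) (hχ' : χ (-1) = 1) :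
    ∃ (V : ValuationSubring ℂ) (t : (ZMod N)ˣ), V.valuation (p : ℂ) < 1 ∧
      V.valuation (gaussSum χ (traceAddChar p F)) ^ N = V.valuation (p : ℂ) ^ cosetValSum u t ∧
      V.valuation (gaussSum χ⁻¹ (traceAddChar p F)) ^ N =
        V.valuation (p : ℂ) ^ cosetValSum u (-t) := by
  have hχ1 : χ ≠ 1 := by
    rintro rfl
    rw [orderOf_one] at hχ
    exact (Fact.out : 1 < N).ne hχ
  obtain ⟨V, ω, hω, hall⟩ := exists_isTeichmuller F
  obtain ⟨t, hle, hle_inv⟩ := hω.exists_valuation_prime_pow_cosetValSum_le hall hu hcard hχ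
  have hprod : V.valuation (gaussSum χ (traceAddChar p F)) ^ N *
      V.valuation (gaussSum χ⁻¹ (traceAddChar p F)) ^ N =
      V.valuation (p : ℂ) ^ cosetValSum u t * V.valuation (p : ℂ) ^ cosetValSum u (-t) := by
    rw [← mul_pow, ← map_mul, gaussSum_mul_gaussSum_inv hχ1 hχ' (isPrimitive_traceAddChar p F),
      hcard, Nat.cast_pow, map_pow, ← pow_mul, mul_comm, ← cosetValSum_add_neg, pow_add]
  have hpos : 0 < V.valuation (p : ℂ) := by
    rw [zero_lt_iff, Valuation.ne_zero_iff]
    exact_mod_cast (Fact.out : p.Prime).ne_zero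
  obtain ⟨heq, heq_inv⟩ := (mul_eq_mul_iff_eq_and_eq_of_pos hle hle_inv (pow_pos hpos _)
    ((pow_pos hpos _).trans_le hle_inv)).mp hprod.symm
  exact ⟨V, t, hω.valuation_prime_lt_one p, heq.symm, heq_inv.symm⟩

end ValuationOfGaussSum

section CosetValSumBound

variable {l r : ℕ} [Fact l.Prime] {u : (ZMod (l ^ r))ˣ}

lemma classNumSqrtNeg_le_orderOf (hl3 : 3 < l) (hl4 : l % 4 = 3) (hr : r ≠ 0)
    (hu : Odd (orderOf u)) (hindex : (l ^ r).totient = 2 * orderOf u) :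
    classNumSqrtNeg l ≤ orderOf u := by
  have : Fact (1 < l ^ r) := ⟨Nat.one_lt_pow hr (by omega)⟩
  have hadd := cosetValSum_add_neg u 1
  have hsub := abs_cosetValSum_sub_neg hl3 hl4 hr hu hindex 1
  have hle : (l : ℤ) ^ r * classNumSqrtNeg l ≤ l ^ r * orderOf u := by
    rw [← hsub, ← Nat.cast_pow, ← Nat.cast_mul, ← hadd, abs_le]
    constructor <;> push_cast <;> linarith [Nat.zero_le (cosetValSum u 1)]
  exact_mod_cast le_of_mul_le_mul_left hle (by positivity)

lemma le_cosetValSum (hl3 : 3 < l) (hl4 : l % 4 = 3) (hr : r ≠ 0)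
    (hu : Odd (orderOf u)) (hindex : (l ^ r).totient = 2 * orderOf u) (t : (ZMod (l ^ r))ˣ) :
    (orderOf u - classNumSqrtNeg l) / 2 * l ^ r ≤ cosetValSum u t := by
  have : Fact (1 < l ^ r) := ⟨Nat.one_lt_pow hr (by omega)⟩
  have hh := classNumSqrtNeg_le_orderOf hl3 hl4 hr hu hindex
  have hadd : (cosetValSum u t + cosetValSum u (-t) : ℤ) = l ^ r * orderOf u := by
    exact_mod_cast cosetValSum_add_neg u t
  have hsub := abs_cosetValSum_sub_neg hl3 hl4 hr hu hindex t
  have hhalf : (2 * ((orderOf u - classNumSqrtNeg l) / 2 : ℕ) : ℤ) ≤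
      orderOf u - classNumSqrtNeg l := by omega
  generalize (orderOf u - classNumSqrtNeg l) / 2 = m at hhalf ⊢
  have hmul := mul_le_mul_of_nonneg_left hhalf (by positivity : (0 : ℤ) ≤ l ^ r)
  zify
  linarith [neg_abs_le ((cosetValSum u t : ℤ) - cosetValSum u (-t))]

variable {p : ℕ} [Fact p.Prime] {F : Type*} [Field F] [Fintype F] [Algebra (ZMod p) F]

lemma exists_valuation_gaussSum_le (hl3 : 3 < l) (hl4 : l % 4 = 3) (hr : r ≠ 0)
    (hu : (u : ZMod (l ^ r)) = p) (hodd : Odd (orderOf u))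
    (hindex : (l ^ r).totient = 2 * orderOf u) (hcard : Fintype.card F = p ^ orderOf u)
    {χ : MulChar F ℂ} (hχ : orderOf χ = l ^ r) :
    ∃ V : ValuationSubring ℂ, V.valuation (p : ℂ) < 1 ∧ ∀ φ ∈ ({χ, χ⁻¹} : Set (MulChar F ℂ)),
      V.valuation (gaussSum φ (traceAddChar p F)) ≤
        V.valuation (p : ℂ) ^ ((orderOf u - classNumSqrtNeg l) / 2) := by
  have : Fact (1 < l ^ r) := ⟨Nat.one_lt_pow hr (by omega)⟩
  have hχ' : χ (-1) = 1 := by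
    refine apply_neg_one_of_odd_orderOf ?_
    rw [hχ]
    exact (Nat.odd_iff.mpr (by omega)).pow
  obtain ⟨V, t, hp, hval, hval_inv⟩ := exists_valuation_gaussSum_pow_eq hu hcard hχ hχ'
  have hbound {x : ℂ} {s : (ZMod (l ^ r))ˣ}
      (hx : V.valuation x ^ l ^ r = V.valuation (p : ℂ) ^ cosetValSum u s) :
      V.valuation x ≤ V.valuation (p : ℂ) ^ ((orderOf u - classNumSqrtNeg l) / 2) := by
    rw [← pow_le_pow_iff_left₀ zero_le zero_le (NeZero.ne (l ^ r)), ← pow_mul, hx]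
    exact pow_le_pow_right_of_le_one' hp.le (le_cosetValSum hl3 hl4 hr hodd hindex s)
  refine ⟨V, hp, ?_⟩
  rintro φ (rfl | rfl)
  exacts [hbound hval, hbound hval_inv]

end CosetValSumBound

section GaloisDescent

/-- The `ℚ`-algebra of families `c ↦ z c` of complex numbers generated by `c ↦ ζ ^ c`, where
`ζ = exp(2πi/n)`. Its members are the families of conjugates of elements `z 1` of `ℚ(ζ)`: for `c`
coprime to `n`, the value `z c` is the image of `z 1` under the automorphism `ζ ↦ ζ ^ c`. -/
noncomputable def conjugateFamilies (n : ℕ) : Subalgebra ℚ (ℕ → ℂ) :=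
  Algebra.adjoin ℚ {fun c ↦ zetaP n ^ c}

variable {n : ℕ}

lemma sum_mem_conjugateFamilies {ι : Type*} {s : Finset ι} {z : ι → ℕ → ℂ}
    (hz : ∀ i ∈ s, z i ∈ conjugateFamilies n) :
    (fun c ↦ ∑ i ∈ s, z i c) ∈ conjugateFamilies n := by
  rw [← Finset.sum_fn]
  exact sum_mem hz

lemma pow_mem_conjugateFamilies [NeZero n] {y : ℂ} (hy : y ^ n = 1) :
    (fun c ↦ y ^ c) ∈ conjugateFamilies n := by
  obtain ⟨k, -, rfl⟩ := (isPrimitiveRoot_zetaP n).eq_pow_of_pow_eq_one hy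
  have hgen := Subalgebra.pow_mem _ (Algebra.subset_adjoin (R := ℚ) <|
    Set.mem_singleton fun c ↦ zetaP n ^ c) k
  refine (congrArg (· ∈ conjugateFamilies n) ?_).mp hgen
  ext c
  rw [Pi.pow_apply, pow_right_comm]

lemma exists_aeval_eq_of_mem_conjugateFamilies {z : ℕ → ℂ} (hz : z ∈ conjugateFamilies n) :
    ∃ P : ℚ[X], ∀ c, aeval (zetaP n ^ c) P = z c := by
  rw [conjugateFamilies, Algebra.adjoin_singleton_eq_range_aeval] at hz
  obtain ⟨P, rfl⟩ := hz
  exact ⟨P, fun c ↦ aeval_algHom_apply (Pi.evalAlgHom ℚ (fun _ : ℕ ↦ ℂ) c) _ P⟩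

variable [NeZero n]

lemma exists_ratCast_eq_of_forall_algHom_eq {K : Type*} [Field K] [Algebra ℚ K]
    [FiniteDimensional ℚ K] {x : K} {z : ℂ} (hx : ∀ σ : K →ₐ[ℚ] ℂ, σ x = z) :
    ∃ q : ℚ, (q : ℂ) = z := by
  have htrace := trace_eq_sum_embeddings (K := ℚ) (L := K) ℂ (x := x)
  rw [Finset.sum_congr rfl fun σ _ ↦ hx σ, Finset.sum_const, nsmul_eq_mul,
    eq_ratCast, Finset.card_univ, AlgHom.card] at htrace
  refine ⟨Algebra.trace ℚ K x / Module.finrank ℚ K, ?_⟩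
  have hrank : (Module.finrank ℚ K : ℂ) ≠ 0 := by exact_mod_cast Module.finrank_pos.ne'
  rw [Rat.cast_div, htrace, Rat.cast_natCast, mul_div_cancel_left₀ _ hrank]

lemma exists_ratCast_eq_of_mem_conjugateFamilies {z : ℕ → ℂ} (hz : z ∈ conjugateFamilies n)
    (hfix : ∀ c : ℕ, c.Coprime n → z c = z 1) : ∃ q : ℚ, (q : ℂ) = z 1 := by
  obtain ⟨P, hP⟩ := exists_aeval_eq_of_mem_conjugateFamilies hz
  have hζ := isPrimitiveRoot_zetaP n
  have : FiniteDimensional ℚ ℚ⟮zetaP n⟯ :=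
    adjoin.finiteDimensional (hζ.isIntegral (NeZero.pos n)).tower_top
  have hgen : IsPrimitiveRoot (AdjoinSimple.gen ℚ (zetaP n)) n :=
    .of_map_of_injective (f := algebraMap ℚ⟮zetaP n⟯ ℂ) (by rwa [AdjoinSimple.algebraMap_gen])
      (algebraMap ℚ⟮zetaP n⟯ ℂ).injective
  refine exists_ratCast_eq_of_forall_algHom_eq (x := aeval (AdjoinSimple.gen ℚ (zetaP n)) P)
    fun σ ↦ ?_
  obtain ⟨c, -, hcop, hc⟩ := hζ.isPrimitiveRoot_iff.mp (hgen.map_of_injective (f := σ) σ.injective)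
  rw [← aeval_algHom_apply, ← hc, hP, hfix c hcop]

lemma sum_mulChar_mul_addChar_mem_conjugateFamilies {F : Type*} [Field F] [Fintype F]
    {χ : MulChar F ℂ} (hχ : χ ^ n = 1) {ψ : AddChar F ℂ} (hψ : ∀ x, ψ x ^ n = 1) :
    (fun c ↦ ∑ x, (χ ^ c) x * ψ x ^ c) ∈ conjugateFamilies n := by
  refine sum_mem_conjugateFamilies fun x _ ↦ ?_
  rcases eq_or_ne x 0 with rfl | hx
  · simp only [MulChar.map_zero, zero_mul]
    exact zero_mem _
  · have hχx : χ x ^ n = 1 := by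
      rw [← MulChar.pow_apply' _ (NeZero.ne n), hχ, MulChar.one_apply hx.isUnit]
    have hpow (c : ℕ) : (χ ^ c) x = χ x ^ c := MulChar.pow_apply_coe χ c (Units.mk0 x hx)
    simp only [hpow]
    exact mul_mem (pow_mem_conjugateFamilies hχx) (pow_mem_conjugateFamilies (hψ x))

variable {l : ℕ} [Fact l.Prime]

lemma gaussSum_legendreChar_mulShift (ψ : AddChar (ZMod l) ℂ) {c : ℕ} (hc : c.Coprime l) :
    gaussSum (legendreChar l) (ψ.mulShift c) =
      quadraticChar (ZMod l) c * gaussSum (legendreChar l) ψ := by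
  have hunit : ((ZMod.unitOfCoprime c hc : (ZMod l)ˣ) : ZMod l) = c := ZMod.coe_unitOfCoprime c hc
  have hsq : legendreChar l c * legendreChar l c = 1 := by
    rw [← sq, legendreChar_apply]
    exact_mod_cast quadraticChar_sq_one (hunit ▸ (ZMod.unitOfCoprime c hc).ne_zero)
  rw [← gaussSum_mulShift (legendreChar l) ψ (ZMod.unitOfCoprime c hc), hunit,
    ← legendreChar_apply, ← mul_assoc, hsq, one_mul]

lemma gaussSum_legendreChar_mem_conjugateFamilies (hln : l ∣ n) (ψ : AddChar (ZMod l) ℂ) :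
    (fun c : ℕ ↦ gaussSum (legendreChar l) (ψ.mulShift c)) ∈ conjugateFamilies n := by
  simp only [gaussSum]
  refine sum_mem_conjugateFamilies fun a _ ↦ ?_
  obtain ⟨k, rfl⟩ := hln
  have hψ : ψ a ^ (l * k) = 1 := by
    rw [pow_mul, ← AddChar.map_nsmul_eq_pow, ZModModule.char_nsmul_eq_zero,
      AddChar.map_zero_eq_one, one_pow]
  have hshift (c : ℕ) : ψ.mulShift c a = ψ a ^ c := by
    rw [AddChar.mulShift_apply, ← nsmul_eq_mul, AddChar.map_nsmul_eq_pow]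
  simp only [hshift, legendreChar_apply]
  exact mul_mem (intCast_mem _ _) (pow_mem_conjugateFamilies hψ)

end GaloisDescent

section ConjugatesOfGaussSum

variable {l r : ℕ}

lemma orderOf_intCast_dvd_of_dvd_sub_one (hr : r ≠ 0) {a : ℤ} (ha : (l : ℤ) ∣ a - 1) :
    orderOf (a : ZMod (l ^ r)) ∣ l ^ (r - 1) := by
  have hdvd := dvd_sub_pow_of_dvd_sub ha (r - 1)
  rw [Nat.sub_add_cancel (Nat.pos_of_ne_zero hr), one_pow] at hdvd
  refine orderOf_dvd_of_pow_eq_one (sub_eq_zero.mp ?_)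
  have hzero := (ZMod.intCast_zmod_eq_zero_iff_dvd (a ^ l ^ (r - 1) - 1) (l ^ r)).mpr
    (by exact_mod_cast hdvd)
  exact_mod_cast hzero

variable [Fact l.Prime] {u : (ZMod (l ^ r))ˣ}

lemma pow_pred_lt_orderOf (hl3 : 3 < l) (hr : r ≠ 0) (hindex : (l ^ r).totient = 2 * orderOf u) :
    l ^ (r - 1) < orderOf u := by
  rw [Nat.totient_prime_pow Fact.out (Nat.pos_of_ne_zero hr)] at hindex
  have hpos : 0 < l ^ (r - 1) := pow_pos (Fact.out : l.Prime).pos _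
  have hle : l ^ (r - 1) * 3 ≤ l ^ (r - 1) * (l - 1) := Nat.mul_le_mul_left _ (by omega)
  omega

lemma exists_eq_pow_or_eq_neg_pow {N : ℕ} [NeZero N] (hN : 2 < N) {u : (ZMod N)ˣ}
    (hu : Odd (orderOf u)) (hindex : N.totient = 2 * orderOf u) (v : (ZMod N)ˣ) :
    ∃ i : ℕ, v = u ^ i ∨ v = -u ^ i := by
  obtain ⟨⟨i, b⟩, rfl⟩ := (bijective_pow_mul_sign (orderOf_neg_one_units hN) hu
    (by rw [ZMod.card_units_eq_totient, hindex]) 1).surjective v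
  cases b
  · exact ⟨i, .inl (by simp)⟩
  · exact ⟨i, .inr (by simp)⟩

variable {p : ℕ} [Fact p.Prime]

lemma coprime_pow_sub_one (hl3 : 3 < l) (hr : r ≠ 0) (hu : (u : ZMod (l ^ r)) = p)
    (hindex : (l ^ r).totient = 2 * orderOf u) : (l ^ r).Coprime (p - 1) := by
  refine ((Fact.out : l.Prime).coprime_iff_not_dvd.mpr fun h ↦ ?_).pow_left r
  have hdvd : (l : ℤ) ∣ p - 1 := by
    have := Int.natCast_dvd_natCast.mpr h
    rwa [Nat.cast_pred (Fact.out : p.Prime).pos] at this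
  have horder := orderOf_intCast_dvd_of_dvd_sub_one hr hdvd
  rw [Int.cast_natCast, ← hu, orderOf_units] at horder
  exact (pow_pred_lt_orderOf hl3 hr hindex).not_ge
    (Nat.le_of_dvd (pow_pos (Fact.out : l.Prime).pos _) horder)

variable {F : Type*} [Field F] [Algebra (ZMod p) F] {N : ℕ} {χ : MulChar F ℂ}

lemma apply_algebraMap_eq_one [NeZero N] (hN : N.Coprime (p - 1)) (hχ : χ ^ N = 1) {a : ZMod p}
    (ha : a ≠ 0) :
    χ (algebraMap (ZMod p) F a) = 1 := by
  have hpow : χ (algebraMap (ZMod p) F a) ^ N = 1 := by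
    rw [← MulChar.pow_apply' _ (NeZero.ne N), hχ,
      MulChar.one_apply ((_root_.map_ne_zero _).mpr ha).isUnit]
  have hpow' : χ (algebraMap (ZMod p) F a) ^ (p - 1) = 1 := by
    rw [← map_pow, ← map_pow, ZMod.pow_card_sub_one_eq_one ha, map_one, map_one]
  simpa [hN.gcd_eq_one] using pow_gcd_eq_one.mpr ⟨hpow, hpow'⟩

variable [Fintype F]

variable (p) in
/-- The family of conjugates of the Gauss sum `G(χ)`, see `conjugateFamilies`. -/
noncomputable def gaussSumFamily (χ : MulChar F ℂ) (c : ℕ) : ℂ :=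
  ∑ x, (χ ^ c) x * traceAddChar p F x ^ c

lemma gaussSumFamily_mem_conjugateFamilies [NeZero N] (hχ : χ ^ N = 1) :
    gaussSumFamily p χ ∈ conjugateFamilies (N * p) := by
  refine sum_mulChar_mul_addChar_mem_conjugateFamilies (by rw [pow_mul, hχ, one_pow]) fun x ↦ ?_
  rw [traceAddChar_apply, ← pow_mul, mul_comm N, mul_left_comm, pow_mul,
    (isPrimitiveRoot_zetaP p).pow_eq_one, one_pow]

lemma gaussSumFamily_apply [NeZero N] (hN : N.Coprime (p - 1)) (hχ : χ ^ N = 1) {c : ℕ}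
    (hc : c.Coprime p) : gaussSumFamily p χ c = gaussSum (χ ^ c) (traceAddChar p F) :=
  sum_mul_traceAddChar_pow p
    (fun _ ↦ apply_algebraMap_eq_one hN (by rw [pow_right_comm, hχ, one_pow])) hc

lemma gaussSumFamily_one : gaussSumFamily p χ 1 = gaussSum χ (traceAddChar p F) := by
  simp only [gaussSumFamily, gaussSum, pow_one]

lemma gaussSum_pow_of_natCast_eq (hχ : χ ^ N = 1) {c i : ℕ} (hc : (c : ZMod N) = p ^ i) :
    gaussSum (χ ^ c) (traceAddChar p F) = gaussSum χ (traceAddChar p F) := by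
  rw [← Nat.cast_pow, ZMod.natCast_eq_natCast_iff] at hc
  rw [pow_eq_pow_iff_modEq.mpr (hc.of_dvd (orderOf_dvd_of_pow_eq_one hχ)), gaussSum_pow_char_pow]

lemma gaussSum_pow_of_natCast_eq_neg (hχ : χ ^ N = 1) {c i : ℕ} (hc : (c : ZMod N) = -p ^ i) :
    gaussSum (χ ^ c) (traceAddChar p F) = gaussSum χ⁻¹ (traceAddChar p F) := by
  obtain ⟨k, hk⟩ : N ∣ c + p ^ i := by
    rw [← ZMod.natCast_eq_zero_iff, Nat.cast_add, hc, Nat.cast_pow, neg_add_cancel]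
  have hinv : χ ^ c = χ⁻¹ ^ p ^ i := by
    rw [inv_pow, eq_inv_iff_mul_eq_one, ← pow_add, hk, pow_mul, hχ, one_pow]
  rw [hinv, gaussSum_pow_char_pow]

variable (F) in
lemma gaussSum_pow_dichotomy (hl3 : 3 < l) (hl4 : l % 4 = 3) (hr : r ≠ 0)
    (hu : (u : ZMod (l ^ r)) = p) (hodd : Odd (orderOf u))
    (hindex : (l ^ r).totient = 2 * orderOf u) {c : ℕ} (hc : c.Coprime (l ^ r)) :
    (quadraticChar (ZMod l) c = 1 ∧ ∀ χ : MulChar F ℂ, χ ^ l ^ r = 1 →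
      gaussSum (χ ^ c) (traceAddChar p F) = gaussSum χ (traceAddChar p F)) ∨
    (quadraticChar (ZMod l) c = -1 ∧ ∀ χ : MulChar F ℂ, χ ^ l ^ r = 1 →
      gaussSum (χ ^ c) (traceAddChar p F) = gaussSum χ⁻¹ (traceAddChar p F)) := by
  have hl : l ∣ l ^ r := dvd_pow_self l hr
  have hquad := quadraticChar_eq_one_of_odd_orderOf hl hodd
  rw [hu, map_natCast] at hquad
  have hmod : ZMod.castHom hl (ZMod l) c = c := map_natCast _ c
  obtain ⟨i, h⟩ := exists_eq_pow_or_eq_neg_pow (hl3.le.trans (Nat.le_self_pow hr l)) hodd hindex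
    (ZMod.unitOfCoprime c hc)
  refine h.imp (fun h ↦ ?_) fun h ↦ ?_
  all_goals
    replace h := congrArg Units.val h
    simp only [ZMod.coe_unitOfCoprime, Units.val_neg, Units.val_pow_eq_pow_val, hu] at h
    rw [h] at hmod
  · refine ⟨?_, fun χ hχ ↦ gaussSum_pow_of_natCast_eq hχ h⟩
    rw [← hmod, map_pow, map_natCast, map_pow, hquad, one_pow]
  · refine ⟨?_, fun χ hχ ↦ gaussSum_pow_of_natCast_eq_neg hχ h⟩
    rw [← hmod, map_neg, map_pow, map_natCast, neg_eq_neg_one_mul, map_mul, map_pow, hquad,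
      one_pow, mul_one, quadraticChar_neg_one_of_three_mod_four hl4]

end ConjugatesOfGaussSum

section Rationality

variable {l r p : ℕ} [Fact l.Prime] [Fact p.Prime] {u : (ZMod (l ^ r))ˣ}
  {F : Type*} [Field F] [Fintype F] [Algebra (ZMod p) F] {χ : MulChar F ℂ}

lemma exists_ratCast_eq_gaussSum_add_inv (hl3 : 3 < l) (hl4 : l % 4 = 3) (hr : r ≠ 0)
    (hu : (u : ZMod (l ^ r)) = p) (hodd : Odd (orderOf u))
    (hindex : (l ^ r).totient = 2 * orderOf u) (hχ : χ ^ l ^ r = 1) :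
    ∃ q : ℚ, (q : ℂ) = gaussSum χ (traceAddChar p F) + gaussSum χ⁻¹ (traceAddChar p F) := by
  have hχ' : χ⁻¹ ^ l ^ r = 1 := by rw [inv_pow, hχ, inv_one]
  have hN := coprime_pow_sub_one hl3 hr hu hindex
  have hmem := add_mem (gaussSumFamily_mem_conjugateFamilies (p := p) hχ)
    (gaussSumFamily_mem_conjugateFamilies hχ')
  obtain ⟨q, hq⟩ := exists_ratCast_eq_of_mem_conjugateFamilies hmem fun c hc ↦ by
    have hcp := hc.coprime_mul_left_right
    simp only [Pi.add_apply, gaussSumFamily_one, gaussSumFamily_apply hN hχ hcp,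
      gaussSumFamily_apply hN hχ' hcp]
    rcases gaussSum_pow_dichotomy F hl3 hl4 hr hu hodd hindex hc.coprime_mul_right_right with
      ⟨-, h⟩ | ⟨-, h⟩
    · rw [h χ hχ, h χ⁻¹ hχ']
    · rw [h χ hχ, h χ⁻¹ hχ', inv_inv, add_comm]
  rw [Pi.add_apply, gaussSumFamily_one, gaussSumFamily_one] at hq
  exact ⟨q, hq⟩

lemma exists_ratCast_eq_gaussSum_sub_inv_mul (hl3 : 3 < l) (hl4 : l % 4 = 3) (hr : r ≠ 0)
    (hu : (u : ZMod (l ^ r)) = p) (hodd : Odd (orderOf u))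
    (hindex : (l ^ r).totient = 2 * orderOf u) (hχ : χ ^ l ^ r = 1) (ψ : AddChar (ZMod l) ℂ) :
    ∃ q : ℚ, (q : ℂ) = (gaussSum χ (traceAddChar p F) - gaussSum χ⁻¹ (traceAddChar p F)) *
      gaussSum (legendreChar l) ψ := by
  have hl : l ∣ l ^ r := dvd_pow_self l hr
  have hχ' : χ⁻¹ ^ l ^ r = 1 := by rw [inv_pow, hχ, inv_one]
  have hN := coprime_pow_sub_one hl3 hr hu hindex
  have hmem := mul_mem (sub_mem (gaussSumFamily_mem_conjugateFamilies (p := p) hχ)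
    (gaussSumFamily_mem_conjugateFamilies hχ'))
    (gaussSum_legendreChar_mem_conjugateFamilies (hl.mul_right p) ψ)
  obtain ⟨q, hq⟩ := exists_ratCast_eq_of_mem_conjugateFamilies hmem fun c hc ↦ by
    have hcp := hc.coprime_mul_left_right
    have hcN := hc.coprime_mul_right_right
    simp only [Pi.mul_apply, Pi.sub_apply, gaussSumFamily_one, gaussSumFamily_apply hN hχ hcp,
      gaussSumFamily_apply hN hχ' hcp, Nat.cast_one, AddChar.mulShift_one,
      gaussSum_legendreChar_mulShift ψ (hcN.of_dvd_right hl)]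
    rcases gaussSum_pow_dichotomy F hl3 hl4 hr hu hodd hindex hcN with ⟨hc1, h⟩ | ⟨hc1, h⟩
    · rw [h χ hχ, h χ⁻¹ hχ', hc1, Int.cast_one, one_mul]
    · rw [h χ hχ, h χ⁻¹ hχ', inv_inv, hc1]
      push_cast
      ring
  simp only [Pi.mul_apply, Pi.sub_apply, gaussSumFamily_one, Nat.cast_one,
    AddChar.mulShift_one] at hq
  exact ⟨q, hq⟩

lemma exists_ratCast_mul_sqrtNeg_eq_gaussSum_sub_inv (hl3 : 3 < l) (hl4 : l % 4 = 3) (hr : r ≠ 0)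
    (hu : (u : ZMod (l ^ r)) = p) (hodd : Odd (orderOf u))
    (hindex : (l ^ r).totient = 2 * orderOf u) (hχ : χ ^ l ^ r = 1) :
    ∃ q : ℚ, gaussSum χ (traceAddChar p F) - gaussSum χ⁻¹ (traceAddChar p F) = q * sqrtNeg l := by
  obtain ⟨q, hq⟩ := exists_ratCast_eq_gaussSum_sub_inv_mul (F := F) hl3 hl4 hr hu hodd hindex hχ
    ZMod.stdAddChar
  have hsq := gaussSum_legendreChar_sq hl4 (ZMod.isPrimitive_stdAddChar l)
  have hl0 : (l : ℂ) ≠ 0 := NeZero.ne _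
  rcases sq_eq_sq_iff_eq_or_eq_neg.mp (hsq.trans (sqrtNeg_sq l).symm) with hg | hg
  · refine ⟨-q / l, ?_⟩
    rw [hg] at hq
    rw [Rat.cast_div, Rat.cast_neg, hq, Rat.cast_natCast]
    field_simp
    rw [sqrtNeg_sq]
    ring
  · refine ⟨q / l, ?_⟩
    rw [hg] at hq
    rw [Rat.cast_div, hq, Rat.cast_natCast]
    field_simp
    rw [sqrtNeg_sq]
    ring

lemma exists_intCast_eq_gaussSum_add_sub_inv (hl3 : 3 < l) (hl4 : l % 4 = 3) (hr : r ≠ 0)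
    (hu : (u : ZMod (l ^ r)) = p) (hodd : Odd (orderOf u))
    (hindex : (l ^ r).totient = 2 * orderOf u) (hcard : Fintype.card F = p ^ orderOf u)
    (hχ : orderOf χ = l ^ r) :
    ∃ A B : ℤ, gaussSum χ (traceAddChar p F) + gaussSum χ⁻¹ (traceAddChar p F) = A ∧
      gaussSum χ (traceAddChar p F) - gaussSum χ⁻¹ (traceAddChar p F) = B * sqrtNeg l ∧
      A ^ 2 + l * B ^ 2 = 4 * (p : ℤ) ^ orderOf u := by
  have hχN : χ ^ l ^ r = 1 := hχ ▸ pow_orderOf_eq_one χ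
  obtain ⟨x, hx⟩ := exists_ratCast_eq_gaussSum_add_inv (F := F) hl3 hl4 hr hu hodd hindex hχN
  obtain ⟨y, hy⟩ :=
    exists_ratCast_mul_sqrtNeg_eq_gaussSum_sub_inv (F := F) hl3 hl4 hr hu hodd hindex hχN
  obtain ⟨A, rfl⟩ := exists_intCast_eq_of_isIntegral (q := x) <| by
    rw [hx]
    exact (isIntegral_gaussSum p χ).add (isIntegral_gaussSum p χ⁻¹)
  have hmul : gaussSum χ (traceAddChar p F) * gaussSum χ⁻¹ (traceAddChar p F) =
      (p : ℂ) ^ orderOf u := by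
    have hχ1 : χ ≠ 1 := by
      rintro rfl
      rw [orderOf_one] at hχ
      exact (Nat.one_lt_pow hr (by omega)).ne hχ
    have hχ' : χ (-1) = 1 := apply_neg_one_of_odd_orderOf (hχ ▸ (Nat.odd_iff.mpr (by omega)).pow)
    rw [gaussSum_mul_gaussSum_inv hχ1 hχ' (isPrimitive_traceAddChar p F), hcard, Nat.cast_pow]
  have hnorm : (A : ℚ) ^ 2 + l * y ^ 2 = 4 * (p : ℚ) ^ orderOf u := by
    have : (A : ℂ) ^ 2 + l * y ^ 2 = 4 * (p : ℂ) ^ orderOf u := by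
      have hsub := congrArg (· ^ 2) hy
      simp only [mul_pow, sqrtNeg_sq] at hsub
      rw [Rat.cast_intCast] at hx
      rw [hx, ← hmul]
      linear_combination hsub
    exact_mod_cast this
  obtain ⟨B, rfl⟩ := exists_intCast_eq_of_squarefree_mul_sq
    (Fact.out : l.Prime).prime.squarefree (y := y) (c := 4 * p ^ orderOf u - A ^ 2) (by
      push_cast
      linear_combination hnorm)
  exact ⟨A, B, by exact_mod_cast hx.symm, by exact_mod_cast hy, by exact_mod_cast hnorm⟩

end Rationality

section IntegerValuation

variable {K : Type*} [Field K] {V : ValuationSubring K} {p : ℕ} [Fact p.Prime]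

lemma dvd_of_valuation_lt_one (hp : V.valuation (p : K) < 1) {n : ℤ}
    (hn : V.valuation (n : K) < 1) : (p : ℤ) ∣ n := by
  by_contra hndvd
  obtain ⟨a, b, hab⟩ := (Nat.prime_iff_prime_int.mp Fact.out).coprime_iff_not_dvd.mpr hndvd
  have hle (c : ℤ) : V.valuation (c : K) ≤ 1 :=
    valuation_le_one_of_isIntegral V (isIntegral_intCast c)
  have hlt : V.valuation ((a : K) * p + b * n) < 1 := by
    refine Valuation.map_add_lt _ ?_ ?_ <;> rw [map_mul]
    · exact mul_lt_one_of_nonneg_of_lt_one_right (hle a) zero_le hp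
    · exact mul_lt_one_of_nonneg_of_lt_one_right (hle b) zero_le hn
  have hone : (a : K) * p + b * n = 1 := by exact_mod_cast congrArg (Int.cast (R := K)) hab
  rw [hone, map_one] at hlt
  exact hlt.false

lemma pow_dvd_of_valuation_le_pow [CharZero K] (hp : V.valuation (p : K) < 1) {m : ℕ} {n : ℤ}
    (hn : V.valuation (n : K) ≤ V.valuation (p : K) ^ m) : (p : ℤ) ^ m ∣ n := by
  induction m generalizing n with
  | zero => exact pow_zero (p : ℤ) ▸ one_dvd n
  | succ m ih =>
    obtain ⟨k, rfl⟩ :=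
      dvd_of_valuation_lt_one hp (hn.trans_lt (pow_lt_one₀ zero_le hp m.succ_ne_zero))
    have hpos : 0 < V.valuation (p : K) := by
      rw [zero_lt_iff, Valuation.ne_zero_iff]
      exact_mod_cast (Fact.out : p.Prime).ne_zero
    rw [Int.cast_mul, Int.cast_natCast, map_mul, pow_succ'] at hn
    rw [pow_succ']
    exact mul_dvd_mul_left _ (ih (le_of_mul_le_mul_left hn hpos))

lemma valuation_natCast_eq_one (hp : V.valuation (p : K) < 1) {m : ℕ} (hm : ¬ p ∣ m) :
    V.valuation (m : K) = 1 := by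
  refine (valuation_le_one_of_isIntegral V (isIntegral_natCast m)).antisymm
    (not_lt.mp fun hlt ↦ hm ?_)
  exact Int.natCast_dvd_natCast.mp (dvd_of_valuation_lt_one hp (by exact_mod_cast hlt))

lemma valuation_sub_one_lt_one_of_pow_eq_one (hp : V.valuation (p : K) < 1) {r : ℕ} {y : K}
    (hy : y ^ p ^ r = 1) : V.valuation (y - 1) < 1 := by
  have hyV : y ∈ V := by
    rw [← V.valuation_le_one_iff]
    refine valuation_le_one_of_isIntegral V
      (IsIntegral.of_pow (pow_pos (Fact.out : p.Prime).pos r) ?_)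
    exact hy ▸ isIntegral_one
  obtain ⟨s, hs⟩ := exists_add_pow_prime_pow_eq (Fact.out : p.Prime) ((⟨y, hyV⟩ : V) - 1) 1 r
  have hpow : (y - 1) ^ p ^ r = -(p * ((y - 1) * s)) := by
    have := congrArg (Subtype.val : V → K) hs
    simp only [sub_add_cancel] at this
    push_cast at this
    rw [hy, one_pow] at this
    linear_combination -this
  rw [← pow_lt_one_iff_of_nonneg zero_le (pow_ne_zero r (Fact.out : p.Prime).ne_zero), ← map_pow,
    hpow, Valuation.map_neg, map_mul]
  refine mul_lt_one_of_nonneg_of_lt_one_left zero_le hp ?_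
  exact (V.valuation_le_one_iff _).mpr (mul_mem (sub_mem hyV (one_mem V)) s.2)

lemma valuation_sqrtNeg {V : ValuationSubring ℂ} (hp : V.valuation (p : ℂ) < 1) {m : ℕ}
    (hm : ¬ p ∣ m) : V.valuation (sqrtNeg m) = 1 := by
  rw [← pow_eq_one_iff_of_nonneg zero_le two_ne_zero, ← map_pow, sqrtNeg_sq, Valuation.map_neg,
    valuation_natCast_eq_one hp hm]

end IntegerValuation

section Congruence

variable {p l r : ℕ} [Fact p.Prime] [Fact l.Prime] {F : Type*} [Field F] [Fintype F]
  [Algebra (ZMod p) F] {χ : MulChar F ℂ}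

variable (p) in
lemma valuation_gaussSum_add_one_lt_one {V : ValuationSubring ℂ} (hV : V.valuation (l : ℂ) < 1)
    (hχ : χ ^ l ^ r = 1) : V.valuation (gaussSum χ (traceAddChar p F) + 1) < 1 := by
  have hone := gaussSum_one_left (R' := ℂ) (traceAddChar_ne_one p F)
  have hsum : gaussSum χ (traceAddChar p F) + 1 =
      ∑ x, (χ x - (1 : MulChar F ℂ) x) * traceAddChar p F x := by
    simp only [sub_mul, Finset.sum_sub_distrib]
    rw [← gaussSum, ← gaussSum, hone, sub_neg_eq_add]
  rw [hsum]
  refine Valuation.map_sum_lt _ one_ne_zero fun x _ ↦ ?_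
  rw [map_mul]
  refine mul_lt_one_of_nonneg_of_lt_one_left zero_le ?_
    (valuation_le_one_of_isIntegral V (isIntegral_traceAddChar p x))
  rcases eq_or_ne x 0 with rfl | hx
  · rw [MulChar.map_zero, MulChar.map_zero, sub_zero, map_zero]
    exact zero_lt_one
  · rw [MulChar.one_apply hx.isUnit]
    refine valuation_sub_one_lt_one_of_pow_eq_one hV (r := r) ?_
    rw [← MulChar.pow_apply' _ (NeZero.ne (l ^ r)), hχ, MulChar.one_apply hx.isUnit]

lemma gaussSum_add_inv_modEq_neg_two (hχ : χ ^ l ^ r = 1) {A : ℤ}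
    (hA : gaussSum χ (traceAddChar p F) + gaussSum χ⁻¹ (traceAddChar p F) = A) :
    A ≡ -2 [ZMOD l] := by
  obtain ⟨V, ω, hω, -⟩ := exists_isTeichmuller (ZMod l)
  have hV := hω.valuation_prime_lt_one l
  have hχ' : χ⁻¹ ^ l ^ r = 1 := by rw [inv_pow, hχ, inv_one]
  have hlt := V.valuation.map_add_lt (valuation_gaussSum_add_one_lt_one p hV hχ)
    (valuation_gaussSum_add_one_lt_one p hV hχ')
  rw [add_add_add_comm, hA, one_add_one_eq_two] at hlt
  refine (Int.modEq_iff_dvd.mpr ?_).symm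
  rw [sub_neg_eq_add]
  exact dvd_of_valuation_lt_one hV (by exact_mod_cast hlt)

end Congruence

section Assembly

lemma pow_orderOf_modEq_one {N l a : ℕ} (hl : l ∣ N) {u : (ZMod N)ˣ} (hu : (u : ZMod N) = a) :
    (a : ℤ) ^ orderOf u ≡ 1 [ZMOD l] := by
  have hpow : ((a ^ orderOf u : ℕ) : ZMod N) = (1 : ℕ) := by
    rw [Nat.cast_pow, ← hu, ← Units.val_pow_eq_pow_val, pow_orderOf_eq_one, Units.val_one,
      Nat.cast_one]
  rw [ZMod.natCast_eq_natCast_iff] at hpow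
  exact_mod_cast Int.natCast_modEq_iff.mpr (hpow.of_dvd hl)

lemma eq_of_sq_add_mul_sq_eq_pow {p d c a b : ℤ} (hp : p ≠ 0) {m h : ℕ}
    (H : (p ^ m * a) ^ 2 + d * (p ^ m * b) ^ 2 = c * p ^ (2 * m + h)) :
    c * p ^ h = a ^ 2 + d * b ^ 2 := by
  refine mul_left_cancel₀ (pow_ne_zero (2 * m) hp) ?_
  rw [pow_add, pow_mul'] at H
  rw [pow_mul']
  linear_combination -H

lemma modEq_mul_pow_of_pow_mul_modEq {n p a c : ℤ} {m k : ℕ} (ha : p ^ m * a ≡ c [ZMOD n])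
    (hp : p ^ (m + k) ≡ 1 [ZMOD n]) : a ≡ c * p ^ k [ZMOD n] :=
  calc a = 1 * a := (one_mul a).symm
    _ ≡ p ^ (m + k) * a [ZMOD n] := hp.symm.mul_right a
    _ = p ^ m * a * p ^ k := by ring
    _ ≡ c * p ^ k [ZMOD n] := ha.mul_right _

variable {l r : ℕ} [Fact l.Prime] {u : (ZMod (l ^ r))ˣ}

lemma exists_orderOf_eq_two_mul_add (hl3 : 3 < l) (hl4 : l % 4 = 3) (hr : r ≠ 0)
    (hodd : Odd (orderOf u)) (hindex : (l ^ r).totient = 2 * orderOf u) :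
    ∃ m, orderOf u = 2 * m + classNumSqrtNeg l := by
  have hle := classNumSqrtNeg_le_orderOf hl3 hl4 hr hodd hindex
  obtain ⟨m, hm⟩ := (Nat.Odd.sub_odd hodd (odd_classNumSqrtNeg l hl3 hl4)).two_dvd
  exact ⟨m, by omega⟩

variable {p : ℕ} [Fact p.Prime] {F : Type*} [Field F] [Fintype F] [Algebra (ZMod p) F]
  {χ : MulChar F ℂ}

lemma exists_gaussSum_add_sub_inv_eq_pow_mul (hl3 : 3 < l) (hl4 : l % 4 = 3) (hr : r ≠ 0)
    (hu : (u : ZMod (l ^ r)) = p) (hodd : Odd (orderOf u))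
    (hindex : (l ^ r).totient = 2 * orderOf u) (hcard : Fintype.card F = p ^ orderOf u)
    (hχ : orderOf χ = l ^ r) {m : ℕ} (hm : orderOf u = 2 * m + classNumSqrtNeg l) :
    ∃ a b : ℤ,
      gaussSum χ (traceAddChar p F) + gaussSum χ⁻¹ (traceAddChar p F) = (p ^ m * a : ℤ) ∧
      gaussSum χ (traceAddChar p F) - gaussSum χ⁻¹ (traceAddChar p F) =
        (p ^ m * b : ℤ) * sqrtNeg l ∧
      (p ^ m * a) ^ 2 + l * (p ^ m * b) ^ 2 = 4 * (p : ℤ) ^ orderOf u := by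
  obtain ⟨A, B, hA, hB, hAB⟩ :=
    exists_intCast_eq_gaussSum_add_sub_inv hl3 hl4 hr hu hodd hindex hcard hχ
  obtain ⟨V, hV, hle⟩ := exists_valuation_gaussSum_le hl3 hl4 hr hu hodd hindex hcard hχ
  rw [hm, Nat.add_sub_cancel, Nat.mul_div_cancel_left m two_pos] at hle
  have hpl : ¬p ∣ l := by
    rw [← (Fact.out : p.Prime).coprime_iff_not_dvd]
    have hcop : p.Coprime (l ^ r) := (ZMod.isUnit_iff_coprime p _).mp (hu ▸ u.isUnit)
    exact hcop.coprime_dvd_right (dvd_pow_self l hr)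
  have hχ_le := hle χ (.inl rfl)
  have hinv_le := hle χ⁻¹ (.inr rfl)
  obtain ⟨a, rfl⟩ : (p : ℤ) ^ m ∣ A := by
    refine pow_dvd_of_valuation_le_pow hV ?_
    rw [← hA]
    exact V.valuation.map_add_le hχ_le hinv_le
  obtain ⟨b, rfl⟩ : (p : ℤ) ^ m ∣ B := by
    refine pow_dvd_of_valuation_le_pow hV ?_
    have hB_le := V.valuation.map_sub_le hχ_le hinv_le
    rwa [hB, map_mul, valuation_sqrtNeg hV hpl, mul_one] at hB_le
  exact ⟨a, b, hA, hB, hAB⟩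

end Assembly

end IndexTwo

open IndexTwo

theorem statement3 (p l r N f : ℕ) (hp : p.Prime) (hl : l.Prime) (hl4 : l % 4 = 3)
    (hl3 : 3 < l) (hr : 1 ≤ r) (hN : N = l ^ r) (hNp : Nat.gcd N p = 1)
    (hf : orderOf (p : ZMod N) = f) (hind : f = Nat.totient N / 2)
    (F : Type) [Field F] [Fintype F] [Algebra (ZMod p) F]
    (hcard : Fintype.card F = p ^ f)
    (χ : MulChar F ℂ) (hχord : orderOf χ = N) :
    Odd f ∧ Odd (classNumSqrtNeg l) ∧
      ∃ a b : ℤ,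
        4 * (p : ℤ) ^ classNumSqrtNeg l = a ^ 2 + (l : ℤ) * b ^ 2 ∧
        a ≡ -2 * (p : ℤ) ^ ((f + classNumSqrtNeg l) / 2) [ZMOD (l : ℤ)] ∧
        gaussSumN p χ 1 =
          (1 / 2 : ℂ) * (p : ℂ) ^ (((f : ℤ) - (classNumSqrtNeg l : ℤ)) / 2) *
            ((a : ℂ) + (b : ℂ) * sqrtNeg l) := by
  have := Fact.mk hp
  have := Fact.mk hl
  have hr0 : r ≠ 0 := Nat.one_le_iff_ne_zero.mp hr
  subst hN
  obtain ⟨u, hu⟩ : IsUnit (p : ZMod (l ^ r)) :=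
    (ZMod.isUnit_iff_coprime p _).mpr (Nat.Coprime.symm hNp)
  obtain rfl : orderOf u = f := by rw [← hf, ← hu, orderOf_units]
  have hodd : Odd (orderOf u) := hind ▸ odd_totient_div_two hl hl4 hr0
  have hindex : (l ^ r).totient = 2 * orderOf u := by
    rw [hind, Nat.mul_div_cancel' (Nat.totient_even (hl3.le.trans (Nat.le_self_pow hr0 l))).two_dvd]
  obtain ⟨m, hm⟩ := exists_orderOf_eq_two_mul_add hl3 hl4 hr0 hodd hindex
  obtain ⟨a, b, hadd, hsub, hnorm⟩ := exists_gaussSum_add_sub_inv_eq_pow_mul hl3 hl4 hr0 hu hodd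
    hindex hcard hχord hm
  have hmod := gaussSum_add_inv_modEq_neg_two (hχord ▸ pow_orderOf_eq_one χ) hadd
  refine ⟨hodd, odd_classNumSqrtNeg l hl3 hl4, a, b, ?_, ?_, ?_⟩
  · exact eq_of_sq_add_mul_sq_eq_pow (NeZero.ne _) (hm ▸ hnorm)
  · refine modEq_mul_pow_of_pow_mul_modEq hmod ?_
    convert pow_orderOf_modEq_one (dvd_pow_self l hr0) hu using 2
    omega
  · rw [gaussSumN_eq_gaussSum, pow_one,
      show ((orderOf u : ℤ) - classNumSqrtNeg l) / 2 = m by omega, zpow_natCast]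
    push_cast at hadd hsub
    linear_combination (hadd + hsub) / 2
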